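/- Fix p > 2, k ∈ (0, d_p), M, L > 0 and a function ε ↦ C_ε from (0,1) to (0,∞). There exists r₀ > 0, depending only on n, p, k, M, L and the function ε ↦ C_ε, and for all σ, θ > 0 a constant K = K(n, p, k, M, σ, θ) > 0, with the following property. Let ω ⊂ ℝⁿ be a bounded open set with C² boundary, a ∈ ∂ω, R > 0, D = B_{2R}(a) ∩ ω; assume ω satisfies an inner sphere condition of radius R at each point of B_R(a) ∩ ∂ω, that the distance function δ(x) = dist(x, ∂ω) is C² on the closure of D with ‖Δδ‖_{L∞(D)} ≤ L, and write ν(x) = ∇δ(x). Let T₀ ∈ ℝ, θ > 0 and let v, its first and second spatial derivatives and its first time derivative be continuous on D̄ × [T₀−θ, T₀], with v_t − Δv = |∇v|^p in D × (T₀−θ, T₀), v = 0 on (B_R(a) ∩ ∂ω) × (T₀−θ, T₀), |v_t| ≤ M in D × (T₀−θ, T₀), and suppose that for every ε ∈ (0,1), every (x,t) ∈ D × (T₀−θ, T₀) and every unit vector τ orthogonal to ν(x), |∇v(x,t)·τ|^p + |τ·(D²v(x,t))τ| ≤ ε δ(x)^{−βp} + C_ε. If for some r ∈ (0, min{r₀,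 R}] and some σ ∈ (0, r] one has |∇v(b + rν_b, t)·ν_b| ≤ k r^{−β} for all b ∈ B_σ(a) ∩ ∂ω and all t ∈ (T₀−θ, T₀), then |∇v| ≤ K on (B_{σ/8}(a) ∩ ω) × (T₀−θ/4, T₀). -/

import Mathlib

open Set Metric Filter RealInnerProductSpace

noncomputable section

/-- A set `Ω ⊆ ℝⁿ` has boundary of class `C²`: near each boundary point, `Ω` is the strict
sublevel set of a `C²` function with nonvanishing gradient (equivalently, after a rigid motion,
the boundary is locally the graph of a `C²` function with `Ω` strictly on one side). -/
def IsC2Boundary {n : ℕ} (Ω : Set (EuclideanSpace ℝ (Fin n))) : Prop :=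
  ∀ x ∈ frontier Ω, ∃ f : EuclideanSpace ℝ (Fin n) → ℝ, ∃ U ∈ nhds x,
    ContDiffOn ℝ 2 f U ∧ (∀ y ∈ U, fderiv ℝ f y ≠ 0) ∧
    U ∩ Ω = U ∩ {y | f y < 0} ∧ U ∩ frontier Ω = U ∩ {y | f y = 0}

/-!
Write `d` for the distance to `∂ω`. Along a normal ray, the bound on `vₜ` and the tangential bounds
reduce the equation, up to small multiples of `d ^ (-βp)`, to an ODE inequality for the normal
derivative. Integrating it from the endpoint `d = r`, where the normal derivative is at most
`k₁ r ^ (-β)` with `k < k₁ < β ^ β`, gives `|∇v| ≤ (k₁ + ε) d ^ (-β)` and, since `v = 0` on `∂ω`,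
`|v| ≤ c d ^ (1 - β)` with `c (1 - β) = k₁`.

Since `k₁ < β ^ β`, the profile `c d ^ (1 - β)` is a supersolution with room to spare, so
`c ((d + P ^ (1 / (1 - β))) ^ (1 - β) - P)` is still one for a small space-time cutoff `P`. It is the
profile where `P = 0`, vanishes on `∂ω`, and is linear in `d` where `P` is bounded below. Comparison
for `v` and `-v` therefore gives `|v| ≤ K d` in a smaller cylinder. Finally
`|∇v| ^ (p - 1) ≤ C / d` turns the equation into `|Δv| ≤ M + (C / d) |∇v|`, and an interior gradient
estimate on a ball around `x` of radius proportional to `d x` bounds `|∇v x|`.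
-/

open scoped Topology Laplacian

variable {E : Type*} [NormedAddCommGroup E] [InnerProductSpace ℝ E]

/-! ### Gradient and Laplacian at a point -/

section GradLaplacian

lemma deriv_deriv_nonpos_of_isLocalMax {f : ℝ → ℝ} {a : ℝ} (hmax : IsLocalMax f a)
    (hcont : ContinuousAt f a) : deriv (deriv f) a ≤ 0 := by
  by_contra! hpos
  have hmin := isLocalMin_of_deriv_deriv_pos hpos hmax.deriv_eq_zero hcont
  have hconst : f =ᶠ[𝓝 a] fun _ => f a := by
    filter_upwards [hmax, hmin] with s hle hge using le_antisymm hle hge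
  have hzero : deriv (deriv f) a = 0 := by
    rw [hconst.deriv.deriv_eq]
    simp
  exact hpos.ne' hzero

section Gradient

variable [CompleteSpace E]

lemma hasGradientAt_of_inner_eq {u : E → ℝ} {L : E →L[ℝ] ℝ} {g x : E} (hu : HasFDerivAt u L x)
    (hL : ∀ z, L z = ⟪z, g⟫) : HasGradientAt u g x := by
  have hLg : InnerProductSpace.toDual ℝ E g = L := by
    ext z
    simp [hL, real_inner_comm]
  rw [hasGradientAt_iff_hasFDerivAt]
  exact hLg ▸ hu

lemma hasGradientAt_comp_of_hasDerivAt {u : E → ℝ} {g x : E} {φ : ℝ → ℝ} {φ' : ℝ}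
    (hφ : HasDerivAt φ φ' (u x)) (hu : HasGradientAt u g x) :
    HasGradientAt (fun y => φ (u y)) (φ' • g) x := by
  rw [hasGradientAt_iff_hasFDerivAt, map_smul]
  exact hφ.comp_hasFDerivAt x hu.hasFDerivAt

end Gradient

variable [FiniteDimensional ℝ E]

/-- `HasGradLaplacianAt u g l x` says that `u` is twice differentiable at `x`, with gradient `g`
and Laplacian `l`; the Laplacian is encoded as the trace of the derivative of a gradient field. -/
def HasGradLaplacianAt (u : E → ℝ) (g : E) (l : ℝ) (x : E) : Prop :=
  ∃ (G : E → E) (A : E →L[ℝ] E), (∀ᶠ y in 𝓝 x, HasGradientAt u (G y) y) ∧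
    HasFDerivAt G A x ∧ G x = g ∧ LinearMap.trace ℝ E A = l

lemma hasGradLaplacianAt_const (c : ℝ) (x : E) :
    HasGradLaplacianAt (fun _ => c) 0 0 x :=
  ⟨fun _ => 0, 0, .of_forall fun y => hasGradientAt_const y c, hasFDerivAt_const _ _, rfl,
    by simp⟩

lemma hasGradLaplacianAt_inner_left (e x : E) : HasGradLaplacianAt (fun y => ⟪y, e⟫) e 0 x := by
  refine ⟨fun _ => e, 0, .of_forall fun y => ?_, hasFDerivAt_const _ _, rfl, by simp⟩
  exact hasGradientAt_of_inner_eq ((hasFDerivAt_id y).inner ℝ (hasFDerivAt_const e y)) (by simp)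

lemma hasGradLaplacianAt_norm_sub_sq (a x : E) :
    HasGradLaplacianAt (fun y => ‖y - a‖ ^ 2) ((2 : ℝ) • (x - a)) (2 * Module.finrank ℝ E) x := by
  refine ⟨fun y => (2 : ℝ) • (y - a), (2 : ℝ) • ContinuousLinearMap.id ℝ E,
    .of_forall fun y => ?_, ((hasFDerivAt_id x).sub_const a).const_smul 2, rfl, by simp⟩
  exact hasGradientAt_of_inner_eq ((hasFDerivAt_id y).sub_const a).norm_sq
    fun z => by simp [inner_smul_right, inner_sub_right, real_inner_comm]

lemma laplacian_eq_sum_fderiv_fderiv {ι : Type*} [Fintype ι]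
    (b : OrthonormalBasis ι ℝ E) {f : E → ℝ} {x : E} (hf : ContDiffAt ℝ 2 f x) :
    Δ f x = ∑ i, fderiv ℝ (fun y => fderiv ℝ f y (b i)) x (b i) := by
  have hdiff : DifferentiableAt ℝ (fderiv ℝ f) x :=
    (hf.fderiv_right (m := 1) le_rfl).differentiableAt one_ne_zero
  rw [InnerProductSpace.laplacian_eq_iteratedFDeriv_orthonormalBasis f b]
  refine Finset.sum_congr rfl fun i _ => ?_
  rw [iteratedFDeriv_two_apply, fderiv_clm_apply hdiff (differentiableAt_const _)]
  simp

lemma hasGradLaplacianAt_of_contDiffAt {u : E → ℝ} {x : E} (hu : ContDiffAt ℝ 2 u x) :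
    HasGradLaplacianAt u (gradient u x) (Δ u x) x := by
  let toE : (E →L[ℝ] ℝ) →L[ℝ] E :=
    (InnerProductSpace.toDual ℝ E).symm.toLinearIsometry.toContinuousLinearMap
  have hfderiv : HasFDerivAt (fderiv ℝ u) (fderiv ℝ (fderiv ℝ u) x) x :=
    ((hu.fderiv_right (m := 1) le_rfl).differentiableAt one_ne_zero).hasFDerivAt
  refine ⟨gradient u, _, ?_, toE.hasFDerivAt.comp x hfderiv, rfl, ?_⟩
  · filter_upwards [hu.eventually (by simp)] with y hy
    exact (hy.differentiableAt two_ne_zero).hasGradientAt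
  · rw [InnerProductSpace.laplacian_eq_iteratedFDeriv_stdOrthonormalBasis,
      LinearMap.trace_eq_sum_inner _ (stdOrthonormalBasis ℝ E)]
    refine Finset.sum_congr rfl fun i _ => ?_
    rw [real_inner_comm]
    simp [toE, iteratedFDeriv_two_apply]

namespace HasGradLaplacianAt

variable {u w : E → ℝ} {g h x : E} {l m : ℝ}

lemma hasGradientAt (hu : HasGradLaplacianAt u g l x) : HasGradientAt u g x := by
  obtain ⟨G, A, hG, -, rfl, -⟩ := hu
  exact hG.self_of_nhds

lemma continuousAt (hu : HasGradLaplacianAt u g l x) : ContinuousAt u x :=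
  hu.hasGradientAt.continuousAt

lemma add (hu : HasGradLaplacianAt u g l x) (hw : HasGradLaplacianAt w h m x) :
    HasGradLaplacianAt (fun y => u y + w y) (g + h) (l + m) x := by
  obtain ⟨G, A, hG, hA, rfl, rfl⟩ := hu
  obtain ⟨H, B, hH, hB, rfl, rfl⟩ := hw
  refine ⟨fun y => G y + H y, A + B, ?_, hA.add hB, rfl, by simp⟩
  filter_upwards [hG, hH] with y hGy hHy
  rw [hasGradientAt_iff_hasFDerivAt, map_add]
  exact hGy.hasFDerivAt.add hHy.hasFDerivAt

lemma comp_hasDerivAt {φ φ' : ℝ → ℝ} {φ'' : ℝ} (hu : HasGradLaplacianAt u g l x)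
    (hφ : ∀ᶠ s in 𝓝 (u x), HasDerivAt φ (φ' s) s) (hφ' : HasDerivAt φ' φ'' (u x)) :
    HasGradLaplacianAt (fun y => φ (u y)) (φ' (u x) • g) (φ'' * ‖g‖ ^ 2 + φ' (u x) * l) x := by
  have hcont := hu.continuousAt
  obtain ⟨G, A, hG, hA, rfl, rfl⟩ := hu
  have hφ'u := hφ'.comp_hasFDerivAt x hG.self_of_nhds.hasFDerivAt
  refine ⟨fun y => φ' (u y) • G y, _, ?_, hφ'u.smul hA, rfl, ?_⟩
  · filter_upwards [hG, hcont.eventually hφ] with y hGy hφy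
    exact hasGradientAt_comp_of_hasDerivAt hφy hGy
  · rw [ContinuousLinearMap.toLinearMap_add, map_add, ContinuousLinearMap.coe_smulRight,
      LinearMap.trace_smulRight]
    simp [add_comm]

lemma const_mul (c : ℝ) (hu : HasGradLaplacianAt u g l x) :
    HasGradLaplacianAt (fun y => c * u y) (c • g) (c * l) x := by
  simpa using hu.comp_hasDerivAt (φ := fun s => c * s) (φ' := fun _ => c)
    (.of_forall fun s => by simpa using (hasDerivAt_id s).const_mul c) (hasDerivAt_const _ c)

lemma sub (hu : HasGradLaplacianAt u g l x) (hw : HasGradLaplacianAt w h m x) :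
    HasGradLaplacianAt (fun y => u y - w y) (g - h) (l - m) x := by
  simpa [sub_eq_add_neg] using hu.add (hw.const_mul (-1))

lemma rpow (hu : HasGradLaplacianAt u g l x) (hpos : 0 < u x) (q : ℝ) :
    HasGradLaplacianAt (fun y => u y ^ q) ((q * u x ^ (q - 1)) • g)
      (q * (q - 1) * u x ^ (q - 2) * ‖g‖ ^ 2 + q * u x ^ (q - 1) * l) x := by
  refine hu.comp_hasDerivAt (φ := fun s => s ^ q) (φ' := fun s => q * s ^ (q - 1)) ?_ ?_
  · filter_upwards [lt_mem_nhds hpos] with s hs using Real.hasDerivAt_rpow_const (.inl hs.ne')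
  · have hderiv := (Real.hasDerivAt_rpow_const (p := q - 1) (.inl hpos.ne')).const_mul q
    rwa [← mul_assoc, sub_sub, one_add_one_eq_two] at hderiv

lemma pow_two (hu : HasGradLaplacianAt u g l x) :
    HasGradLaplacianAt (fun y => u y ^ 2) ((2 * u x) • g) (2 * ‖g‖ ^ 2 + 2 * u x * l) x :=
  hu.comp_hasDerivAt (φ := fun s => s ^ 2) (φ' := fun s => 2 * s)
    (.of_forall fun s => by simpa using hasDerivAt_pow 2 s)
    (by simpa using (hasDerivAt_id (u x)).const_mul 2)

lemma comp_isometry (F : E ≃ₗᵢ[ℝ] E) (c : E) (hu : HasGradLaplacianAt u g l (c + F x)) :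
    HasGradLaplacianAt (fun y => u (c + F y)) (F.symm g) l x := by
  obtain ⟨G, A, hG, hA, rfl, rfl⟩ := hu
  have hF (y : E) : HasFDerivAt (fun z => c + F z) (F : E →L[ℝ] E) y :=
    (F : E →L[ℝ] E).hasFDerivAt.const_add c
  refine ⟨fun y => F.symm (G (c + F y)), _, ?_, 
    (F.symm : E →L[ℝ] E).hasFDerivAt.comp x (hA.comp x (hF x)), rfl, ?_⟩
  · filter_upwards [(hF x).continuousAt.eventually hG] with y hy
    refine hasGradientAt_of_inner_eq (hy.hasFDerivAt.comp y (hF y)) fun z => ?_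
    simp [real_inner_comm, F.inner_map_eq_flip]
  · exact LinearMap.trace_conj' (A : E →ₗ[ℝ] E) F.symm.toLinearEquiv

lemma eq_zero_of_isLocalMax (hu : HasGradLaplacianAt u g l x) (hmax : IsLocalMax u x) : g = 0 := by
  simpa using hmax.hasFDerivAt_eq_zero hu.hasGradientAt.hasFDerivAt

lemma nonpos_of_isLocalMax (hu : HasGradLaplacianAt u g l x) (hmax : IsLocalMax u x) : l ≤ 0 := by
  obtain ⟨G, A, hG, hA, -, rfl⟩ := hu
  rw [LinearMap.trace_eq_sum_inner _ (stdOrthonormalBasis ℝ E)]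
  refine Finset.sum_nonpos fun i _ => ?_
  set e := stdOrthonormalBasis ℝ E i
  have hline (s : ℝ) : HasDerivAt (fun s : ℝ => x + s • e) e s := by
    simpa using ((hasDerivAt_id s).smul_const e).const_add x
  have hx : x + (0 : ℝ) • e = x := by simp
  have htend : Tendsto (fun s : ℝ => x + s • e) (𝓝 0) (𝓝 x) := by
    simpa only [hx] using (hline 0).continuousAt.tendsto
  have hderiv : deriv (fun s : ℝ => u (x + s • e)) =ᶠ[𝓝 0] fun s => ⟪e, G (x + s • e)⟫ := by
    filter_upwards [htend.eventually hG] with s hs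
    exact (hs.hasFDerivAt.comp_hasDerivAt s (hline s)).deriv.trans (by simp [real_inner_comm])
  have hA0 : HasFDerivAt G A (x + (0 : ℝ) • e) := by rwa [hx]
  have hderiv2 : HasDerivAt (fun s : ℝ => ⟪e, G (x + s • e)⟫) ⟪e, A e⟫ 0 := by
    simpa using (hasDerivAt_const (0 : ℝ) e).inner ℝ (hA0.comp_hasDerivAt 0 (hline 0))
  have hnonpos := deriv_deriv_nonpos_of_isLocalMax (f := fun s : ℝ => u (x + s • e)) (a := 0)
    (by simpa only [IsLocalMax, IsMaxFilter, hx] using htend.eventually hmax)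
    (ContinuousAt.comp (by simpa only [hx] using hG.self_of_nhds.continuousAt)
      (hline 0).continuousAt)
  rwa [hderiv.deriv_eq, hderiv2.deriv] at hnonpos

end HasGradLaplacianAt

end GradLaplacian

/-! ### Interior gradient estimates -/

section InteriorGradient

-- `z` maximizes `(ρ - dist y x₀) * f y` and `r = ρ - dist z x₀`.
lemma exists_closedBall_forall_le_two_mul {X : Type*} [PseudoMetricSpace X] [ProperSpace X]
    {f : X → ℝ} {x₀ : X} {ρ : ℝ} (hρ : 0 < ρ) (hf : ContinuousOn f (closedBall x₀ ρ))
    (hf₀ : ∀ x, 0 ≤ f x) :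
    ∃ z r, 0 < r ∧ r ≤ ρ ∧ closedBall z (r / 2) ⊆ closedBall x₀ ρ ∧ ρ * f x₀ ≤ r * f z ∧
      ∀ y ∈ closedBall z (r / 2), f y ≤ 2 * f z := by
  have hx₀ : x₀ ∈ closedBall x₀ ρ := mem_closedBall_self hρ.le
  obtain ⟨z, hz, hmax⟩ : ∃ z ∈ ball x₀ ρ,
      IsMaxOn (fun y => (ρ - dist y x₀) * f y) (closedBall x₀ ρ) z := by
    obtain ⟨z, hz, hmax⟩ := (isCompact_closedBall x₀ ρ).exists_isMaxOn
      (f := fun y => (ρ - dist y x₀) * f y) ⟨x₀, hx₀⟩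
      ((by fun_prop : ContinuousOn (fun y => ρ - dist y x₀) _).mul hf)
    rcases (mem_closedBall.1 hz).eq_or_lt with hsphere | hball
    · refine ⟨x₀, mem_ball_self hρ, isMaxOn_iff.2 fun y hy => (isMaxOn_iff.1 hmax y hy).trans ?_⟩
      simpa [hsphere] using mul_nonneg hρ.le (hf₀ x₀)
    · exact ⟨z, hball, hmax⟩
  have hr : 0 < ρ - dist z x₀ := sub_pos.2 hz
  have hsub : closedBall z ((ρ - dist z x₀) / 2) ⊆ closedBall x₀ ρ :=
    closedBall_subset_closedBall' (by linarith)
  refine ⟨z, ρ - dist z x₀, hr, sub_le_self _ dist_nonneg, hsub, by simpa using hmax hx₀,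
    fun y hy => ?_⟩
  have hdist : (ρ - dist z x₀) / 2 ≤ ρ - dist y x₀ := by
    linarith [dist_triangle y z x₀, mem_closedBall.1 hy]
  refine le_of_mul_le_mul_left ?_ (half_pos hr)
  calc (ρ - dist z x₀) / 2 * f y ≤ (ρ - dist y x₀) * f y := by gcongr; exact hf₀ y
    _ ≤ (ρ - dist z x₀) * f z := hmax (hsub hy)
    _ = (ρ - dist z x₀) / 2 * (2 * f z) := by ring

variable {u : E → ℝ} {G : E → E} {l : E → ℝ} {x₀ e : E} {ρ S N : ℝ}

/-- The barrier for the odd part of a function on the half ball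
`{x | ‖x‖ ≤ ρ, 0 ≤ ⟪x, e⟫}`: it has Laplacian `-N`, vanishes at the origin and is at least `S`
on the spherical part of the boundary. -/
def halfBallBarrier (S N ρ : ℝ) (e x : E) : ℝ :=
  S / ρ ^ 2 * ‖x‖ ^ 2 +
    (Module.finrank ℝ E * S / ρ ^ 2 + N / 2) * (ρ * ⟪x, e⟫ - ⟪x, e⟫ ^ 2)

lemma halfBallBarrier_zero (S N ρ : ℝ) (e : E) : halfBallBarrier S N ρ e 0 = 0 := by
  simp [halfBallBarrier]

lemma mul_norm_sq_le_halfBallBarrier {S N ρ : ℝ} (hS : 0 ≤ S) (hN : 0 ≤ N) {e x : E}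
    (he : ‖e‖ = 1) (hx : ‖x‖ ≤ ρ) (hxe : 0 ≤ ⟪x, e⟫) :
    S / ρ ^ 2 * ‖x‖ ^ 2 ≤ halfBallBarrier S N ρ e x := by
  have hle : ⟪x, e⟫ ≤ ρ := (real_inner_le_norm x e).trans (by rwa [he, mul_one])
  have hnonneg : 0 ≤ ρ * ⟪x, e⟫ - ⟪x, e⟫ ^ 2 := by
    rw [sq, ← sub_mul]
    exact mul_nonneg (sub_nonneg.2 hle) hxe
  exact le_add_of_nonneg_right (by positivity)

/-- The odd part of `u`, recentred at `x₀`, with respect to the reflection `x ↦ x - 2⟪x, e⟫e`. -/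
def oddPart (u : E → ℝ) (x₀ e x : E) : ℝ :=
  1 / 2 * (u (x₀ + x) - u (x₀ + (ℝ ∙ e)ᗮ.reflection x))

lemma reflection_mem_closedBall (e : E) {x : E} (hx : ‖x‖ ≤ ρ) :
    x₀ + (ℝ ∙ e)ᗮ.reflection x ∈ closedBall x₀ ρ := by
  simpa using hx

lemma oddPart_le (hu : ∀ y ∈ closedBall x₀ ρ, |u y| ≤ S) {x : E} (hx : ‖x‖ ≤ ρ) :
    oddPart u x₀ e x ≤ S := by
  have hle := (abs_le.1 (hu (x₀ + x) (by simpa using hx))).2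
  have hge := (abs_le.1 (hu _ (reflection_mem_closedBall e hx))).1
  rw [oddPart]
  linarith

lemma oddPart_eq_zero {x : E} (hx : ⟪x, e⟫ = 0) : oddPart u x₀ e x = 0 := by
  have hfix : (ℝ ∙ e)ᗮ.reflection x = x := by
    apply Submodule.reflection_mem_subspace_eq_self
    rwa [Submodule.mem_orthogonal_singleton_iff_inner_left]
  rw [oddPart, hfix, sub_self, mul_zero]

variable [FiniteDimensional ℝ E]

lemma nonpos_of_forall_pos_hasGradLaplacianAt {K : Set E} (hK : IsCompact K) {f : E → ℝ}
    (hf : ContinuousOn f K)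
    (hlap : ∀ x ∈ K, 0 < f x → K ∈ 𝓝 x ∧ ∃ g, ∃ l > 0, HasGradLaplacianAt f g l x) :
    ∀ x ∈ K, f x ≤ 0 := by
  intro x hx
  obtain ⟨y, hy, hmax⟩ := hK.exists_isMaxOn ⟨x, hx⟩ hf
  refine (isMaxOn_iff.1 hmax x hx).trans ?_
  by_contra! hpos
  obtain ⟨hKy, g, l, hl, hjet⟩ := hlap y hy hpos
  exact hl.not_ge (hjet.nonpos_of_isLocalMax (hmax.isLocalMax hKy))

lemma hasGradLaplacianAt_halfBallBarrier (S N ρ : ℝ) {e : E} (he : ‖e‖ = 1) (x : E) :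
    HasGradLaplacianAt (halfBallBarrier S N ρ e)
      ((2 * S / ρ ^ 2) • x +
        ((Module.finrank ℝ E * S / ρ ^ 2 + N / 2) * (ρ - 2 * ⟪x, e⟫)) • e) (-N) x := by
  have hinner := hasGradLaplacianAt_inner_left e x
  have hnorm := hasGradLaplacianAt_norm_sub_sq (0 : E) x
  simp only [sub_zero] at hnorm
  convert (hnorm.const_mul (S / ρ ^ 2)).add (((hinner.const_mul ρ).sub hinner.pow_two).const_mul
    (Module.finrank ℝ E * S / ρ ^ 2 + N / 2)) using 1
  · rfl
  · rw [smul_smul, ← sub_smul, smul_smul]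
    ring_nf
  · rw [he]
    ring

lemma hasGradLaplacianAt_oddPart (hu : ∀ y ∈ closedBall x₀ ρ, HasGradLaplacianAt u (G y) (l y) y)
    {x : E} (hx : ‖x‖ ≤ ρ) :
    HasGradLaplacianAt (oddPart u x₀ e)
      ((1 / 2 : ℝ) • (G (x₀ + x) - (ℝ ∙ e)ᗮ.reflection (G (x₀ + (ℝ ∙ e)ᗮ.reflection x))))
      (1 / 2 * (l (x₀ + x) - l (x₀ + (ℝ ∙ e)ᗮ.reflection x))) x := by
  have hjet := (hu (x₀ + x) (by simpa using hx)).comp_isometry (.refl ℝ E) x₀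
  have hjet' := (hu _ (reflection_mem_closedBall e hx)).comp_isometry (ℝ ∙ e)ᗮ.reflection x₀
  exact (hjet.sub (by simpa using hjet')).const_mul (1 / 2)

lemma oddPart_le_halfBallBarrier (he : ‖e‖ = 1) (hS : 0 ≤ S) (hN : 0 ≤ N)
    (hjet : ∀ y ∈ closedBall x₀ ρ, HasGradLaplacianAt u (G y) (l y) y)
    (hu : ∀ y ∈ closedBall x₀ ρ, |u y| ≤ S) (hl : ∀ y ∈ closedBall x₀ ρ, |l y| < N)
    {x : E} (hx : ‖x‖ ≤ ρ) (hxe : 0 ≤ ⟪x, e⟫) :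
    oddPart u x₀ e x ≤ halfBallBarrier S N ρ e x := by
  let K : Set E := closedBall 0 ρ ∩ {y | 0 ≤ ⟪y, e⟫}
  have hK : IsCompact K :=
    (isCompact_closedBall _ _).inter_right (isClosed_le continuous_const (by fun_prop))
  have hdiff : ∀ y ∈ K, HasGradLaplacianAt
      (fun y => oddPart u x₀ e y - halfBallBarrier S N ρ e y) _ _ y := fun y hy =>
    (hasGradLaplacianAt_oddPart hjet (by simpa using hy.1)).sub
      (hasGradLaplacianAt_halfBallBarrier S N ρ he y)
  refine sub_nonpos.1 (nonpos_of_forall_pos_hasGradLaplacianAt hK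
    (fun y hy => (hdiff y hy).continuousAt.continuousWithinAt) (fun y hy hpos => ?_)
    x ⟨by simpa using hx, hxe⟩)
  have hyρ : ‖y‖ ≤ ρ := by simpa using hy.1
  have hbarrier := mul_norm_sq_le_halfBallBarrier hS hN he hyρ hy.2
  have hye : 0 < ⟪y, e⟫ := by
    refine lt_of_le_of_ne hy.2 fun h0 => hpos.not_ge ?_
    rw [oddPart_eq_zero h0.symm, zero_sub, neg_nonpos]
    exact le_trans (by positivity) hbarrier
  have hyρ' : ‖y‖ < ρ := by
    refine lt_of_le_of_ne hyρ fun h1 => hpos.not_ge (sub_nonpos.2 ?_)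
    have hρ : 0 < ρ := by
      rw [← h1, norm_pos_iff]
      rintro rfl
      simp at hye
    refine (oddPart_le hu hyρ).trans ?_
    rwa [h1, div_mul_cancel₀ S (by positivity)] at hbarrier
  refine ⟨inter_mem (closedBall_mem_nhds_of_mem (by simpa using hyρ')) ?_, _, _, ?_, hdiff y hy⟩
  · have hcont : ContinuousAt (fun z => ⟪z, e⟫) y := by fun_prop
    filter_upwards [hcont.eventually (lt_mem_nhds hye)] with z hz using hz.le
  · have hl₁ := (abs_lt.1 (hl (x₀ + y) (by simpa using hyρ))).1
    have hl₂ := (abs_lt.1 (hl _ (reflection_mem_closedBall e hyρ))).2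
    linarith

lemma inner_gradient_le_of_abs_laplacian_lt (he : ‖e‖ = 1) (hρ : 0 < ρ) (hS : 0 ≤ S) (hN : 0 ≤ N)
    (hjet : ∀ y ∈ closedBall x₀ ρ, HasGradLaplacianAt u (G y) (l y) y)
    (hu : ∀ y ∈ closedBall x₀ ρ, |u y| ≤ S) (hl : ∀ y ∈ closedBall x₀ ρ, |l y| < N) :
    ⟪G x₀, e⟫ ≤ Module.finrank ℝ E * S / ρ + N * ρ / 2 := by
  have hsub : segment ℝ 0 (0 + ρ • e) ⊆ {x | ‖x‖ ≤ ρ ∧ 0 ≤ ⟪x, e⟫} := by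
    rw [segment_eq_image']
    rintro _ ⟨s, ⟨hs0, hs1⟩, rfl⟩
    have hs : s * ρ ≤ ρ := mul_le_of_le_one_left hρ.le hs1
    simp [norm_smul, he, inner_smul_left, abs_of_pos hρ, abs_of_nonneg hs0, hs,
      show 0 ≤ s * ρ by positivity]
  have hmax : IsLocalMaxOn (fun x => oddPart u x₀ e x - halfBallBarrier S N ρ e x)
      (segment ℝ 0 (0 + ρ • e)) 0 := by
    filter_upwards [self_mem_nhdsWithin] with x hx
    simpa only [oddPart_eq_zero (inner_zero_left e), halfBallBarrier_zero, sub_self, sub_nonpos]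
      using oddPart_le_halfBallBarrier he hS hN hjet hu hl (hsub hx).1 (hsub hx).2
  have hgrad := ((hasGradLaplacianAt_oddPart (e := e) hjet (x := 0) (by simpa using hρ.le)).sub
    (hasGradLaplacianAt_halfBallBarrier S N ρ he 0)).hasGradientAt
  have hnonpos := hmax.hasFDerivWithinAt_nonpos hgrad.hasFDerivAt.hasFDerivWithinAt
    (mem_posTangentConeAt_of_segment_subset subset_rfl)
  have hodd : ⟪(ℝ ∙ e)ᗮ.reflection (G x₀), e⟫ = -⟪G x₀, e⟫ := by
    rw [LinearIsometryEquiv.inner_map_eq_flip, Submodule.reflection_symm,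
      Submodule.reflection_orthogonalComplement_singleton_eq_neg, inner_neg_right]
  have hscaled : ρ * (2⁻¹ * (⟪G x₀, e⟫ - -⟪G x₀, e⟫) -
      (Module.finrank ℝ E * S / ρ ^ 2 + N / 2) * ρ) ≤ 0 := by
    simpa [hodd, he] using hnonpos
  have hinner := nonpos_of_mul_nonpos_right hscaled hρ
  have hval : (Module.finrank ℝ E * S / ρ ^ 2 + N / 2) * ρ =
      Module.finrank ℝ E * S / ρ + N * ρ / 2 := by
    field_simp
  rw [hval] at hinner
  linarith

lemma norm_gradient_le_of_abs_laplacian_lt (hρ : 0 < ρ) (hS : 0 ≤ S) (hN : 0 ≤ N)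
    (hjet : ∀ y ∈ closedBall x₀ ρ, HasGradLaplacianAt u (G y) (l y) y)
    (hu : ∀ y ∈ closedBall x₀ ρ, |u y| ≤ S) (hl : ∀ y ∈ closedBall x₀ ρ, |l y| < N) :
    ‖G x₀‖ ≤ Module.finrank ℝ E * S / ρ + N * ρ / 2 := by
  rcases eq_or_ne (G x₀) 0 with h0 | h0
  · rw [h0, norm_zero]
    positivity
  have hnorm : 0 < ‖G x₀‖ := norm_pos_iff.2 h0
  have hle := inner_gradient_le_of_abs_laplacian_lt (e := ‖G x₀‖⁻¹ • G x₀)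
    (by rw [norm_smul, norm_inv, norm_norm, inv_mul_cancel₀ hnorm.ne']) hρ hS hN hjet hu hl
  rwa [inner_smul_right, real_inner_self_eq_norm_sq, sq, inv_mul_cancel_left₀ hnorm.ne'] at hle

lemma norm_gradient_le_of_abs_laplacian_le {M B : ℝ} (hρ : 0 < ρ) (hS : 0 ≤ S) (hM : 0 ≤ M)
    (hB : 0 ≤ B) (hBρ : B * ρ ≤ 1 / 2)
    (hjet : ∀ y ∈ closedBall x₀ ρ, HasGradLaplacianAt u (G y) (l y) y)
    (hG : ContinuousOn G (closedBall x₀ ρ)) (hu : ∀ y ∈ closedBall x₀ ρ, |u y| ≤ S)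
    (hl : ∀ y ∈ closedBall x₀ ρ, |l y| ≤ M + B * ‖G y‖) :
    ‖G x₀‖ ≤ 4 * Module.finrank ℝ E * S / ρ + (M + 1) * ρ := by
  set n := (Module.finrank ℝ E : ℝ)
  obtain ⟨z, r, hr, hrρ, hsub, hx₀, hdouble⟩ :=
    exists_closedBall_forall_le_two_mul hρ hG.norm fun y => norm_nonneg (G y)
  set Q := r * ‖G z‖
  have hGz := norm_gradient_le_of_abs_laplacian_lt (half_pos hr) hS
    (N := M + 1 + B * (2 * ‖G z‖)) (by positivity) (fun y hy => hjet y (hsub hy))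
    (fun y hy => hu y (hsub hy)) fun y hy => (hl y (hsub hy)).trans_lt (by
      linarith [mul_le_mul_of_nonneg_left (hdouble y hy) hB])
  have hQle : Q ≤ 2 * n * S + (M + 1) * r ^ 2 / 4 + B * r * Q / 2 := by
    refine (mul_le_mul_of_nonneg_left hGz hr.le).trans_eq ?_
    field_simp
    ring
  have hBr : B * r * Q ≤ 1 / 2 * Q := by
    gcongr
    exact (mul_le_mul_of_nonneg_left hrρ hB).trans hBρ
  have hMr : (M + 1) * r ^ 2 ≤ (M + 1) * ρ ^ 2 := by gcongr
  have hMρ : 0 ≤ (M + 1) * ρ ^ 2 := by positivity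
  have hnS : 0 ≤ n * S := by positivity
  have hQ : Q ≤ 4 * n * S + (M + 1) * ρ ^ 2 := by linarith
  refine le_of_mul_le_mul_left (hx₀.trans (hQ.trans_eq ?_)) hρ
  field_simp

end InteriorGradient

/-! ### Comparison for parabolic sub- and supersolutions -/

section Cutoff

variable {F : Type*} [NormedAddCommGroup F]

/-- A function vanishing to second order on the sphere of radius `s` around `a` and at time `t₁`,
which localizes comparison arguments to the cylinder over the ball after time `t₁`. -/
def parabolicCutoff (κ : ℝ) (a : F) (s t₁ : ℝ) (x : F) (t : ℝ) : ℝ :=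
  κ * ((s ^ 2 - ‖x - a‖ ^ 2) * (t - t₁)) ^ 2

lemma continuous_parabolicCutoff (κ : ℝ) (a : F) (s t₁ : ℝ) :
    Continuous (fun z : F × ℝ => parabolicCutoff κ a s t₁ z.1 z.2) := by
  unfold parabolicCutoff
  fun_prop

lemma parabolicCutoff_nonneg {κ : ℝ} (hκ : 0 ≤ κ) (a : F) (s t₁ : ℝ) (x : F) (t : ℝ) :
    0 ≤ parabolicCutoff κ a s t₁ x t := mul_nonneg hκ (sq_nonneg _)

lemma ne_and_ne_of_parabolicCutoff_ne_zero {κ s t₁ t : ℝ} {a x : F}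
    (h : parabolicCutoff κ a s t₁ x t ≠ 0) : ‖x - a‖ ≠ s ∧ t ≠ t₁ := by
  constructor <;> rintro rfl <;> simp [parabolicCutoff] at h

lemma parabolicCutoff_le {κ θ s t₁ t : ℝ} {a x : F} (hκ : 0 ≤ κ) (hs : s ≤ 1) (ht₀ : t₁ ≤ t)
    (ht : t - t₁ ≤ θ) (hx : ‖x - a‖ ≤ s) : parabolicCutoff κ a s t₁ x t ≤ κ * θ ^ 2 := by
  have hd₀ : 0 ≤ s ^ 2 - ‖x - a‖ ^ 2 := sub_nonneg.2 (by gcongr)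
  have hd₁ : s ^ 2 - ‖x - a‖ ^ 2 ≤ 1 := by nlinarith [norm_nonneg (x - a)]
  have hT₀ : 0 ≤ t - t₁ := sub_nonneg.2 ht₀
  unfold parabolicCutoff
  gcongr
  exact (mul_le_of_le_one_left hT₀ hd₁).trans ht

end Cutoff

section Parabolic

variable [FiniteDimensional ℝ E]

lemma nonneg_of_hasDerivAt_of_forall_le {f : ℝ → ℝ} {f' t₁ t : ℝ} (ht : t₁ < t)
    (hf : HasDerivAt f f' t) (hmax : ∀ s ∈ Icc t₁ t, f s ≤ f t) : 0 ≤ f' := by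
  have hlocal : IsLocalMaxOn f (Icc t₁ t) t := (isMaxOn_iff.2 hmax).localize
  have hsegment : segment ℝ t (t + (t₁ - t)) ⊆ Icc t₁ t := by
    rw [add_sub_cancel, segment_symm, segment_eq_Icc ht.le]
  have := hlocal.hasFDerivWithinAt_nonpos hf.hasFDerivAt.hasFDerivWithinAt
    (mem_posTangentConeAt_of_segment_subset hsegment)
  simp only [ContinuousLinearMap.toSpanSingleton_apply, smul_eq_mul] at this
  nlinarith

/-- `v` is a function of space and time with time derivative `τ`, spatial gradient `g` and spatial
Laplacian `l` at `(x, t)`; only its time slice at `t` and its space slice at `x` are involved. -/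
def HasParabolicJetAt (v : E → ℝ → ℝ) (τ : ℝ) (g : E) (l : ℝ) (x : E) (t : ℝ) : Prop :=
  HasDerivAt (v x) τ t ∧ HasGradLaplacianAt (fun y => v y t) g l x

namespace HasParabolicJetAt

variable {v w : E → ℝ → ℝ} {τ τ' l l' t : ℝ} {g g' x : E}

lemma add (hv : HasParabolicJetAt v τ g l x t) (hw : HasParabolicJetAt w τ' g' l' x t) :
    HasParabolicJetAt (fun y s => v y s + w y s) (τ + τ') (g + g') (l + l') x t :=
  ⟨hv.1.add hw.1, hv.2.add hw.2⟩

lemma sub (hv : HasParabolicJetAt v τ g l x t) (hw : HasParabolicJetAt w τ' g' l' x t) :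
    HasParabolicJetAt (fun y s => v y s - w y s) (τ - τ') (g - g') (l - l') x t :=
  ⟨hv.1.sub hw.1, hv.2.sub hw.2⟩

lemma const_mul (c : ℝ) (hv : HasParabolicJetAt v τ g l x t) :
    HasParabolicJetAt (fun y s => c * v y s) (c * τ) (c • g) (c * l) x t :=
  ⟨hv.1.const_mul c, hv.2.const_mul c⟩

lemma rpow (hv : HasParabolicJetAt v τ g l x t) (hpos : 0 < v x t) (q : ℝ) :
    HasParabolicJetAt (fun y s => v y s ^ q) (q * v x t ^ (q - 1) * τ)
      ((q * v x t ^ (q - 1)) • g)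
      (q * (q - 1) * v x t ^ (q - 2) * ‖g‖ ^ 2 + q * v x t ^ (q - 1) * l) x t :=
  ⟨(hv.1.rpow_const (Or.inl hpos.ne')).congr_deriv (by ring), hv.2.rpow hpos q⟩

end HasParabolicJetAt

lemma HasGradLaplacianAt.hasParabolicJetAt {u : E → ℝ} {g x : E} {l : ℝ}
    (hu : HasGradLaplacianAt u g l x) (t : ℝ) :
    HasParabolicJetAt (fun y _ => u y) 0 g l x t :=
  ⟨hasDerivAt_const t (u x), hu⟩

/-- `v` satisfies `vₜ - Δv ≤ |∇v|ᵖ` at `(x, t)`, the derivatives being part of the assertion. -/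
def IsSubsolutionAt (p : ℝ) (v : E → ℝ → ℝ) (x : E) (t : ℝ) : Prop :=
  ∃ τ g l, HasParabolicJetAt v τ g l x t ∧ τ - l ≤ ‖g‖ ^ p

/-- `v` satisfies `vₜ - Δv > |∇v|ᵖ` at `(x, t)`, the derivatives being part of the assertion. -/
def IsStrictSupersolutionAt (p : ℝ) (v : E → ℝ → ℝ) (x : E) (t : ℝ) : Prop :=
  ∃ τ g l, HasParabolicJetAt v τ g l x t ∧ ‖g‖ ^ p < τ - l

lemma le_of_isSubsolutionAt_of_isStrictSupersolutionAt {p t₁ t₂ : ℝ} {K : Set E}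
    (hK : IsCompact K) {v V : E → ℝ → ℝ}
    (hcont : ContinuousOn (fun z : E × ℝ => v z.1 z.2 - V z.1 z.2) (K ×ˢ Icc t₁ t₂))
    (hcontact : ∀ x ∈ K, ∀ t ∈ Icc t₁ t₂, V x t < v x t → K ∈ 𝓝 x ∧ t₁ < t ∧
      IsSubsolutionAt p v x t ∧ IsStrictSupersolutionAt p V x t) :
    ∀ x ∈ K, ∀ t ∈ Icc t₁ t₂, v x t ≤ V x t := by
  intro x₀ hx₀ t₀ ht₀
  obtain ⟨⟨x, t⟩, ⟨hx, ht⟩, hmax⟩ :=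
    (hK.prod isCompact_Icc).exists_isMaxOn ⟨(x₀, t₀), hx₀, ht₀⟩ hcont
  have hmax' : ∀ y ∈ K, ∀ s ∈ Icc t₁ t₂, v y s - V y s ≤ v x t - V x t :=
    fun y hy s hs => isMaxOn_iff.1 hmax (y, s) ⟨hy, hs⟩
  refine sub_nonpos.1 ((hmax' x₀ hx₀ t₀ ht₀).trans ?_)
  by_contra! hpos
  obtain ⟨hKx, ht₁, ⟨τ, g, l, hv, hsub⟩, ⟨τ', g', l', hV, hsuper⟩⟩ :=
    hcontact x hx t ht (sub_pos.1 hpos)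
  have htime : 0 ≤ τ - τ' := nonneg_of_hasDerivAt_of_forall_le ht₁ (hv.sub hV).1
    fun s hs => hmax' x hx s ⟨hs.1, hs.2.trans ht.2⟩
  have hspace : IsLocalMax (fun y => v y t - V y t) x := by
    filter_upwards [hKx] with y hy using hmax' y hy t ht
  have hgrad : g = g' := sub_eq_zero.1 ((hv.sub hV).2.eq_zero_of_isLocalMax hspace)
  have hlap : l - l' ≤ 0 := (hv.sub hV).2.nonpos_of_isLocalMax hspace
  rw [hgrad] at hsub
  linarith

/-- At `(x, t)` the time derivative, the gradient and the Laplacian of `v` are at most `j` in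
absolute value. -/
def HasParabolicJetLeAt (v : E → ℝ → ℝ) (j : ℝ) (x : E) (t : ℝ) : Prop :=
  ∃ τ g l, HasParabolicJetAt v τ g l x t ∧ |τ| ≤ j ∧ ‖g‖ ≤ j ∧ |l| ≤ j

-- The bound `‖g‖² ≤ j v` compensates the singular factor `v ^ (q - 2)` when `q < 2`.
lemma HasParabolicJetAt.rpow_hasParabolicJetLeAt {v : E → ℝ → ℝ} {τ l t j q : ℝ} {g x : E}
    (hv : HasParabolicJetAt v τ g l x t) (hpos : 0 < v x t) (hv₁ : v x t ≤ 1) (hτ : |τ| ≤ j)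
    (hg : ‖g‖ ≤ j) (hl : |l| ≤ j) (hg₂ : ‖g‖ ^ 2 ≤ j * v x t) (hq : 1 ≤ q) :
    HasParabolicJetLeAt (fun y s => v y s ^ q) (q * q * j) x t := by
  have hj : 0 ≤ j := (norm_nonneg g).trans hg
  have hqj : q * j ≤ q * q * j := by nlinarith [mul_nonneg hj (sub_nonneg.2 hq)]
  have hfactor : |q * v x t ^ (q - 1)| ≤ q := by
    rw [abs_of_nonneg (by positivity)]
    exact mul_le_of_le_one_right (by positivity)
      (Real.rpow_le_one hpos.le hv₁ (sub_nonneg.2 hq))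
  have hmul : ∀ z, |z| ≤ j → |q * v x t ^ (q - 1) * z| ≤ q * j := fun z hz => by
    rw [abs_mul]
    gcongr
  have hsingular : |q * (q - 1) * v x t ^ (q - 2) * ‖g‖ ^ 2| ≤ q * (q - 1) * j := by
    have hq' : 0 ≤ q - 1 := sub_nonneg.2 hq
    rw [abs_of_nonneg (by positivity)]
    calc q * (q - 1) * v x t ^ (q - 2) * ‖g‖ ^ 2
        ≤ q * (q - 1) * v x t ^ (q - 2) * (j * v x t) := by gcongr
      _ = q * (q - 1) * j * v x t ^ (q - 1) := by
        rw [show q - 1 = q - 2 + 1 by ring, Real.rpow_add_one hpos.ne']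
        ring
      _ ≤ q * (q - 1) * j :=
        mul_le_of_le_one_right (by positivity) (Real.rpow_le_one hpos.le hv₁ hq')
  refine ⟨_, _, _, hv.rpow hpos q, (hmul τ hτ).trans hqj, ?_, ?_⟩
  · rw [norm_smul, Real.norm_eq_abs]
    exact (mul_le_mul hfactor hg (norm_nonneg g) (by positivity)).trans hqj
  · calc _ ≤ q * (q - 1) * j + q * j :=
          (abs_add_le _ _).trans (add_le_add hsingular (hmul l hl))
      _ = q * q * j := by ring

lemma hasParabolicJetAt_parabolicCutoff (κ : ℝ) (a : E) (s t₁ : ℝ) (x : E) (t : ℝ) :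
    HasParabolicJetAt (parabolicCutoff κ a s t₁)
      (2 * κ * (s ^ 2 - ‖x - a‖ ^ 2) ^ 2 * (t - t₁))
      ((-(4 * κ * (s ^ 2 - ‖x - a‖ ^ 2) * (t - t₁) ^ 2)) • (x - a))
      (κ * (t - t₁) ^ 2 *
        (8 * ‖x - a‖ ^ 2 - 4 * Module.finrank ℝ E * (s ^ 2 - ‖x - a‖ ^ 2))) x t := by
  constructor
  · have hlin := ((hasDerivAt_id t).sub_const t₁).const_mul (s ^ 2 - ‖x - a‖ ^ 2)
    refine ((hlin.pow 2).const_mul κ).congr_deriv ?_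
    simp only [id]
    ring
  · have hlin := ((hasGradLaplacianAt_const (s ^ 2) x).sub
      (hasGradLaplacianAt_norm_sub_sq a x)).const_mul (t - t₁)
    convert hlin.pow_two.const_mul κ using 1
    · funext y
      simp only [parabolicCutoff]
      ring
    · simp only [zero_sub, smul_neg, smul_smul, neg_smul]
      congr 2
      ring
    · simp only [zero_sub, smul_neg, smul_smul, norm_neg, norm_smul, Real.norm_eq_abs, mul_pow,
        sq_abs]
      ring

lemma abs_cutoff_derivatives_le {κ j θ N d w T : ℝ} (hκ : 0 ≤ κ) (hN : 0 ≤ N) (hd₀ : 0 ≤ d)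
    (hd₁ : d ≤ 1) (hw₀ : 0 ≤ w) (hw₁ : w ≤ 1) (hT₀ : 0 ≤ T) (hT : T ≤ θ)
    (hκj : κ * (16 + 4 * N) * (θ + θ ^ 2) ≤ j) :
    |2 * κ * d ^ 2 * T| ≤ j ∧ |4 * κ * d * T ^ 2| * w ≤ j ∧
      |κ * T ^ 2 * (8 * w ^ 2 - 4 * N * d)| ≤ j ∧ 16 * κ * T ^ 2 * w ^ 2 ≤ j := by
  have hθ : 0 ≤ θ := hT₀.trans hT
  have hNθ : 0 ≤ N * (θ + θ ^ 2) := by positivity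
  have hbound : ∀ z, z ≤ (16 + 4 * N) * (θ + θ ^ 2) → κ * z ≤ j := fun z hz => by
    linarith [mul_le_mul_of_nonneg_left hz hκ]
  have hT₂ : T ^ 2 ≤ θ ^ 2 := by gcongr
  have hw₂ : w ^ 2 ≤ 1 := pow_le_one₀ hw₀ hw₁
  have hd₂T : d ^ 2 * T ≤ θ := (mul_le_of_le_one_left hT₀ (pow_le_one₀ hd₀ hd₁)).trans hT
  have hdwT : d * w * T ^ 2 ≤ θ ^ 2 :=
    (mul_le_of_le_one_left (sq_nonneg T) (mul_le_one₀ hd₁ hw₀ hw₁)).trans hT₂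
  have hw₂T : w ^ 2 * T ^ 2 ≤ θ ^ 2 := (mul_le_of_le_one_left (sq_nonneg T) hw₂).trans hT₂
  have hNdT : N * (d * T ^ 2) ≤ N * θ ^ 2 :=
    mul_le_mul_of_nonneg_left ((mul_le_of_le_one_left (sq_nonneg T) hd₁).trans hT₂) hN
  have hNdT₀ : 0 ≤ N * (d * T ^ 2) := by positivity
  have hw₂T₀ : 0 ≤ w ^ 2 * T ^ 2 := by positivity
  have hNθ₁ : 0 ≤ N * θ := by positivity
  refine ⟨?_, ?_, ?_, ?_⟩
  · rw [abs_of_nonneg (by positivity)]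
    linarith [hbound (2 * (d ^ 2 * T)) (by nlinarith)]
  · rw [abs_of_nonneg (by positivity)]
    linarith [hbound (4 * (d * w * T ^ 2)) (by nlinarith)]
  · have hupper := hbound (8 * (w ^ 2 * T ^ 2) - 4 * (N * (d * T ^ 2))) (by nlinarith)
    have hlower := hbound (4 * (N * (d * T ^ 2)) - 8 * (w ^ 2 * T ^ 2)) (by nlinarith)
    exact abs_le.2 ⟨by linarith, by linarith⟩
  · linarith [hbound (16 * (w ^ 2 * T ^ 2)) (by nlinarith)]

lemma exists_hasParabolicJetAt_parabolicCutoff_le {κ j θ s t₁ t : ℝ} {a x : E} (hκ : 0 ≤ κ)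
    (hs₀ : 0 ≤ s) (hs : s ≤ 1) (ht₀ : t₁ ≤ t) (ht : t - t₁ ≤ θ)
    (hκj : κ * (16 + 4 * Module.finrank ℝ E) * (θ + θ ^ 2) ≤ j) (hx : ‖x - a‖ ≤ s) :
    ∃ τ g l,
      HasParabolicJetAt (parabolicCutoff κ a s t₁) τ g l x t ∧ |τ| ≤ j ∧ ‖g‖ ≤ j ∧ |l| ≤ j ∧
      ‖g‖ ^ 2 ≤ j * parabolicCutoff κ a s t₁ x t := by
  have hw₀ : 0 ≤ ‖x - a‖ := norm_nonneg _
  obtain ⟨hτ, hg, hl, hg₂⟩ := abs_cutoff_derivatives_le hκ (Nat.cast_nonneg _)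
    (by nlinarith : 0 ≤ s ^ 2 - ‖x - a‖ ^ 2) (by nlinarith) hw₀ (hx.trans hs) (sub_nonneg.2 ht₀) ht
    hκj
  refine ⟨_, _, _, hasParabolicJetAt_parabolicCutoff κ a s t₁ x t, hτ, ?_, hl, ?_⟩
  · rwa [norm_smul, norm_neg, Real.norm_eq_abs]
  · rw [norm_smul, norm_neg, mul_pow, Real.norm_eq_abs, sq_abs, parabolicCutoff]
    calc _ = 16 * κ * (t - t₁) ^ 2 * ‖x - a‖ ^ 2 *
          (κ * ((s ^ 2 - ‖x - a‖ ^ 2) * (t - t₁)) ^ 2) := by ring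
      _ ≤ j * (κ * ((s ^ 2 - ‖x - a‖ ^ 2) * (t - t₁)) ^ 2) := by gcongr

end Parabolic

/-! ### The singular barrier -/

section Barrier

/-- A perturbation of the stationary profile `c δ^(1-β)`: it coincides with the profile where
`P = 0`, still vanishes where `δ = 0`, but grows only linearly in `δ` where `P > 0`. -/
def singularBarrier {X : Type*} (c β : ℝ) (δ : X → ℝ) (P : X → ℝ → ℝ) (x : X) (t : ℝ) : ℝ :=
  c * ((δ x + P x t ^ (1 - β)⁻¹) ^ (1 - β) - P x t)

lemma singularBarrier_eq_zero {X : Type*} {c β t : ℝ} {δ : X → ℝ} {P : X → ℝ → ℝ} {x : X}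
    (hβ : β < 1) (hδ : δ x = 0) (hP : 0 ≤ P x t) : singularBarrier c β δ P x t = 0 := by
  rw [singularBarrier, hδ, zero_add, Real.rpow_inv_rpow hP (sub_pos.2 hβ).ne', sub_self, mul_zero]

lemma singularBarrier_eq_mul_rpow {X : Type*} {c β t : ℝ} {δ : X → ℝ} {P : X → ℝ → ℝ} {x : X}
    (hβ : β < 1) (hP : P x t = 0) : singularBarrier c β δ P x t = c * δ x ^ (1 - β) := by
  rw [singularBarrier, hP, Real.zero_rpow (inv_ne_zero (sub_pos.2 hβ).ne'), add_zero, sub_zero]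

lemma add_rpow_le_rpow_add_mul {q ρ d : ℝ} (hq₀ : 0 ≤ q) (hq₁ : q ≤ 1) (hρ : 0 < ρ) (hd : 0 ≤ d) :
    (d + ρ) ^ q ≤ ρ ^ q + q * ρ ^ (q - 1) * d := by
  have hbernoulli := rpow_one_add_le_one_add_mul_self
    (show -1 ≤ d / ρ by linarith [div_nonneg hd hρ.le]) hq₀ hq₁
  calc (d + ρ) ^ q = (1 + d / ρ) ^ q * ρ ^ q := by
        rw [← Real.mul_rpow (by positivity) hρ.le]
        congr 1
        field_simp
        ring
    _ ≤ (1 + q * (d / ρ)) * ρ ^ q := by gcongr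
    _ = ρ ^ q + q * ρ ^ (q - 1) * d := by
        rw [Real.rpow_sub_one hρ.ne']
        ring

lemma singularBarrier_le {X : Type*} {c β t m : ℝ} {δ : X → ℝ} {P : X → ℝ → ℝ} {x : X}
    (hc : 0 ≤ c) (hβ₀ : 0 ≤ β) (hβ₁ : β < 1) (hδ : 0 ≤ δ x) (hm : 0 < m) (hP : m ≤ P x t) :
    singularBarrier c β δ P x t ≤ c * (1 - β) * (m ^ (1 - β)⁻¹) ^ (-β) * δ x := by
  have hq : 0 < 1 - β := sub_pos.2 hβ₁
  have hP₀ : 0 < P x t := hm.trans_le hP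
  have hadd := add_rpow_le_rpow_add_mul hq.le (by linarith) (Real.rpow_pos_of_pos hP₀ (1 - β)⁻¹) hδ
  rw [Real.rpow_inv_rpow hP₀.le hq.ne', show 1 - β - 1 = -β by ring] at hadd
  have hmono : (P x t ^ (1 - β)⁻¹) ^ (-β) ≤ (m ^ (1 - β)⁻¹) ^ (-β) :=
    Real.rpow_le_rpow_of_nonpos (by positivity) (by gcongr) (by linarith)
  calc singularBarrier c β δ P x t
      ≤ c * ((1 - β) * (P x t ^ (1 - β)⁻¹) ^ (-β) * δ x) := by
        unfold singularBarrier
        gcongr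
        linarith
    _ ≤ c * ((1 - β) * (m ^ (1 - β)⁻¹) ^ (-β) * δ x) := by gcongr
    _ = c * (1 - β) * (m ^ (1 - β)⁻¹) ^ (-β) * δ x := by ring

lemma continuous_singularBarrier {X : Type*} [TopologicalSpace X] {c β : ℝ} {δ : X → ℝ}
    {P : X → ℝ → ℝ} (hβ : β < 1) (hδ : Continuous δ)
    (hP : Continuous fun z : X × ℝ => P z.1 z.2) :
    Continuous fun z : X × ℝ => singularBarrier c β δ P z.1 z.2 := by
  have hq : 0 < 1 - β := sub_pos.2 hβ
  unfold singularBarrier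
  exact continuous_const.mul ((((hδ.comp continuous_fst).add
    (hP.rpow_const fun _ => Or.inr (inv_nonneg.2 hq.le))).rpow_const
      fun _ => Or.inr hq.le).sub hP)

/-- The exponent `β = 1/(p-1)` is subcritical and the profile `c s^(1-β)`, whose derivative is
`c (1-β) s^(-β)`, is a strict supersolution of `-u'' = |u'|ᵖ` robust under errors of size `ι`. -/
structure IsBarrierMargin (p β c ι : ℝ) : Prop where
  pos : 0 < β
  lt_one : β < 1
  mul_eq : β * p = β + 1
  const_pos : 0 < c
  margin_pos : 0 < ι
  margin_lt_one : ι < 1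
  rpow_add_lt : (c * (1 - β) * (1 + ι) + ι) ^ p + 3 * ι < c * (1 - β) * β * (1 - ι) ^ 2

namespace IsBarrierMargin

variable {p β c ι : ℝ}

lemma one_lt (h : IsBarrierMargin p β c ι) : 1 < p := by
  have := h.pos
  have := h.mul_eq
  nlinarith

-- After dividing by `Y ^ (-β - 1)`, to which `Y ^ (-β)` is small by `hYL`, this is the margin.
lemma rpow_lt (h : IsBarrierMargin p β c ι) {Y L a g D l τ lP τP : ℝ} (hY₀ : 0 < Y) (hY₁ : Y ≤ 1)
    (hYL : c * (1 - β) * Y * (L + 2) ≤ ι) (ha : 1 - ι ≤ a) (hg₀ : 0 ≤ g)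
    (hg : g ≤ c * (1 - β) * Y ^ (-β) * (1 + ι) + ι) (hD : |D| ≤ L) (hl : |l| ≤ ι) (hτ : |τ| ≤ ι)
    (hlP : |c * lP| ≤ ι) (hτP : |c * τP| ≤ ι) :
    g ^ p < c * ((1 - β) * Y ^ (-β) * τ - τP) -
      c * ((1 - β) * (-β) * Y ^ (-β - 1) * a ^ 2 + (1 - β) * Y ^ (-β) * (D + l) - lP) := by
  obtain ⟨hβ, hβ₁, hβp, hc, hι, hι₁, hmargin⟩ := h
  set Z := Y ^ (-β - 1) with hZ
  have hZ₁ : 1 ≤ Z := Real.one_le_rpow_of_pos_of_le_one_of_nonpos hY₀ hY₁ (by linarith)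
  have hXZ : Y ^ (-β) = Y * Z := by
    rw [hZ, Real.rpow_sub_one hY₀.ne']
    field_simp
  have hXp : (Y * Z) ^ p = Z := by
    rw [← hXZ, ← Real.rpow_mul hY₀.le, hZ]
    congr 1
    linarith
  have hX₁ : 1 ≤ Y * Z :=
    hXZ ▸ Real.one_le_rpow_of_pos_of_le_one_of_nonpos hY₀ hY₁ (by linarith)
  have hp : 0 < p := by nlinarith
  rw [hXZ] at hg ⊢
  have hgradient : g ^ p ≤ Z * (c * (1 - β) * (1 + ι) + ι) ^ p := calc
    g ^ p ≤ (Y * Z * (c * (1 - β) * (1 + ι) + ι)) ^ p :=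
      Real.rpow_le_rpow hg₀ (by nlinarith) hp.le
    _ = Z * (c * (1 - β) * (1 + ι) + ι) ^ p := by
      rw [Real.mul_rpow (by positivity) (by positivity), hXp]
  have hlower : -(ι * Z) ≤ c * (1 - β) * (Y * Z) * (τ - D - l) := calc
    -(ι * Z) ≤ -(c * (1 - β) * Y * (L + 2) * Z) := by gcongr
    _ = c * (1 - β) * (Y * Z) * (-(L + 2)) := by ring
    _ ≤ c * (1 - β) * (Y * Z) * (τ - D - l) := by
      gcongr
      linarith [(abs_le.1 hD).2, (abs_le.1 hl).2, (abs_le.1 hτ).1]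
  have hconcave : c * (1 - β) * β * Z * (1 - ι) ^ 2 ≤ c * (1 - β) * β * Z * a ^ 2 := by
    gcongr
  have hmarginZ := mul_lt_mul_of_pos_left hmargin (one_pos.trans_le hZ₁)
  have hιZ : ι ≤ ι * Z := le_mul_of_one_le_right hι.le hZ₁
  linarith [(abs_le.1 hlP).1, (abs_le.1 hτP).2]

variable [FiniteDimensional ℝ E]

lemma isStrictSupersolutionAt_singularBarrier (h : IsBarrierMargin p β c ι) {δ : E → ℝ}
    {P : E → ℝ → ℝ} {ν x : E} {D L t : ℝ} (hδ : HasGradLaplacianAt δ ν D x) (hν : ‖ν‖ = 1)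
    (hD : |D| ≤ L) (hρ : HasParabolicJetLeAt (fun y s => P y s ^ (1 - β)⁻¹) ι x t)
    (hP : HasParabolicJetLeAt P (ι / c) x t) (hY₀ : 0 < δ x + P x t ^ (1 - β)⁻¹)
    (hY₁ : δ x + P x t ^ (1 - β)⁻¹ ≤ 1)
    (hYL : c * (1 - β) * (δ x + P x t ^ (1 - β)⁻¹) * (L + 2) ≤ ι) :
    IsStrictSupersolutionAt p (singularBarrier c β δ P) x t := by
  obtain ⟨τρ, gρ, lρ, hjetρ, hτρ, hgρ, hlρ⟩ := hρ
  obtain ⟨τP, gP, lP, hjetP, hτP, hgP, hlP⟩ := hP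
  have hc := h.const_pos
  have hq : 0 < 1 - β := sub_pos.2 h.lt_one
  have hsmall : ∀ z, |z| ≤ ι / c → |c * z| ≤ ι := fun z hz => by
    rwa [abs_mul, abs_of_pos hc, ← le_div_iff₀' hc]
  have hjet := ((((hδ.hasParabolicJetAt t).add hjetρ).rpow hY₀ (1 - β)).sub hjetP).const_mul c
  refine ⟨_, _, _, hjet, ?_⟩
  rw [show 1 - β - 1 = -β by ring, show 1 - β - 2 = -β - 1 by ring, zero_add]
  refine h.rpow_lt hY₀ hY₁ hYL (a := ‖ν + gρ‖) ?_ (norm_nonneg _) ?_ hD hlρ hτρ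
    (hsmall lP hlP) (hsmall τP hτP)
  · linarith [norm_sub_le_norm_add ν gρ]
  · set Y := δ x + P x t ^ (1 - β)⁻¹
    have hA : ‖ν + gρ‖ ≤ 1 + ι := by linarith [norm_add_le ν gρ]
    calc ‖c • (((1 - β) * Y ^ (-β)) • (ν + gρ) - gP)‖
        ≤ ‖(c * (1 - β) * Y ^ (-β)) • (ν + gρ)‖ + ‖c • gP‖ := by
          rw [smul_sub, smul_smul, ← mul_assoc]
          exact norm_sub_le _ _
      _ = c * (1 - β) * Y ^ (-β) * ‖ν + gρ‖ + c * ‖gP‖ := by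
          rw [norm_smul, norm_smul, Real.norm_of_nonneg (by positivity), Real.norm_of_nonneg hc.le]
      _ ≤ c * (1 - β) * Y ^ (-β) * (1 + ι) + ι := by
          gcongr
          rwa [← le_div_iff₀' hc]

end IsBarrierMargin

end Barrier

section BarrierComparison

lemma infDist_frontier_pos {F : Type*} [PseudoMetricSpace F] {ω : Set F} {a x : F}
    (hω : IsOpen ω) (ha : a ∈ frontier ω) (hx : x ∈ ω) : 0 < infDist x (frontier ω) :=
  (isClosed_frontier.notMem_iff_infDist_pos ⟨a, ha⟩).1 fun hfr => hω.frontier_eq ▸ hfr |>.2 hx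

variable [FiniteDimensional ℝ E]

lemma IsBarrierMargin.isStrictSupersolutionAt_cutoff {p β c ι κ j θ s L t₁ t : ℝ} {δ : E → ℝ}
    {a x : E} (h : IsBarrierMargin p β c ι) (hs : 0 ≤ s) (hs₁ : 2 * s ≤ 1)
    (hL : 0 ≤ L) (hsL : c * (1 - β) * (2 * s) * (L + 2) ≤ ι) (hκ : 0 ≤ κ)
    (hκj : κ * (16 + 4 * Module.finrank ℝ E) * (θ + θ ^ 2) ≤ j) (hj₁ : j ≤ 1) (hjs : j ≤ s)
    (hjι : (1 - β)⁻¹ * (1 - β)⁻¹ * j ≤ ι) (hjc : j ≤ ι / c)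
    (hδ : ∃ ν D, HasGradLaplacianAt δ ν D x ∧ ‖ν‖ = 1 ∧ |D| ≤ L) (hδ₀ : 0 < δ x) (hδs : δ x ≤ s)
    (hx : ‖x - a‖ ≤ s) (ht₀ : t₁ ≤ t) (htθ : t - t₁ ≤ θ) (hP : parabolicCutoff κ a s t₁ x t ≠ 0) :
    IsStrictSupersolutionAt p (singularBarrier c β δ (parabolicCutoff κ a s t₁)) x t := by
  have hc := h.const_pos
  have hq : 0 < 1 - β := sub_pos.2 h.lt_one
  have hγ : 1 ≤ (1 - β)⁻¹ := (one_le_inv₀ hq).2 (by linarith [h.pos])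
  have hθ : 0 ≤ θ := (sub_nonneg.2 ht₀).trans htθ
  obtain ⟨τ, g, l, hjet, hτ, hg, hl, hg₂⟩ :=
    exists_hasParabolicJetAt_parabolicCutoff_le hκ hs (by linarith) ht₀ htθ hκj hx
  have hP₀ := (parabolicCutoff_nonneg hκ a s t₁ x t).lt_of_ne' hP
  have hPj : parabolicCutoff κ a s t₁ x t ≤ j :=
    (parabolicCutoff_le hκ (by linarith) ht₀ htθ hx).trans <| hκj.trans' <| by
      have hN : 0 ≤ (Module.finrank ℝ E : ℝ) := Nat.cast_nonneg _
      rw [mul_assoc]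
      gcongr
      nlinarith [mul_nonneg hN hθ, mul_nonneg hN (sq_nonneg θ)]
  obtain ⟨τρ, gρ, lρ, hjetρ, hτρ, hgρ, hlρ⟩ :=
    hjet.rpow_hasParabolicJetLeAt hP₀ (hPj.trans hj₁) hτ hg hl hg₂ hγ
  obtain ⟨ν, D, hjetδ, hν, hD⟩ := hδ
  set P := parabolicCutoff κ a s t₁
  have hρ₀ : 0 < P x t ^ (1 - β)⁻¹ := by positivity
  have hρ : P x t ^ (1 - β)⁻¹ ≤ s :=
    (Real.rpow_le_self_of_le_one hP₀.le (hPj.trans hj₁) hγ).trans (hPj.trans hjs)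
  refine h.isStrictSupersolutionAt_singularBarrier hjetδ hν hD
    ⟨τρ, gρ, lρ, hjetρ, hτρ.trans hjι, hgρ.trans hjι, hlρ.trans hjι⟩
    ⟨τ, g, l, hjet, hτ.trans hjc, hg.trans hjc, hl.trans hjc⟩ (by linarith) (by linarith)
    (hsL.trans' ?_)
  gcongr
  linarith

/-- `v` is a subsolution in the cylinder over `ω ∩ closedBall a s` during the times `I`, is
nonpositive on `∂ω` and stays below the profile `c δ^(1-β)`, where `δ = dist(·, ∂ω)`. -/
structure IsProfileSubsolution (p β c : ℝ) (ω : Set E) (a : E) (s : ℝ) (I : Set ℝ)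
    (v : E → ℝ → ℝ) : Prop where
  continuousOn : ContinuousOn (fun z : E × ℝ => v z.1 z.2) ((closure ω ∩ closedBall a s) ×ˢ I)
  isSubsolutionAt : ∀ x ∈ ω ∩ closedBall a s, ∀ t ∈ I, IsSubsolutionAt p v x t
  nonpos : ∀ x ∈ frontier ω ∩ closedBall a s, ∀ t ∈ I, v x t ≤ 0
  le_profile : ∀ x ∈ ω ∩ closedBall a s, ∀ t ∈ I, v x t ≤ c * infDist x (frontier ω) ^ (1 - β)

lemma IsProfileSubsolution.le_singularBarrier {p β c κ s t₁ t₂ : ℝ} {ω : Set E} {a : E}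
    {v : E → ℝ → ℝ} (hω : IsOpen ω) (hβ : β < 1) (hκ : 0 ≤ κ)
    (hv : IsProfileSubsolution p β c ω a s (Icc t₁ t₂) v)
    (hstrict : ∀ x ∈ ω ∩ closedBall a s, ∀ t ∈ Icc t₁ t₂, parabolicCutoff κ a s t₁ x t ≠ 0 →
      IsStrictSupersolutionAt p (singularBarrier c β (fun y => infDist y (frontier ω))
        (parabolicCutoff κ a s t₁)) x t) :
    ∀ x ∈ closure ω ∩ closedBall a s, ∀ t ∈ Icc t₁ t₂,
      v x t ≤ singularBarrier c β (fun y => infDist y (frontier ω))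
        (parabolicCutoff κ a s t₁) x t := by
  refine le_of_isSubsolutionAt_of_isStrictSupersolutionAt (p := p)
    ((isCompact_closedBall a s).inter_left isClosed_closure)
    (hv.continuousOn.sub (continuous_singularBarrier hβ (continuous_infDist_pt _)
      (continuous_parabolicCutoff κ a s t₁)).continuousOn) fun x hx t ht hlt => ?_
  have hxω : x ∈ ω := by
    by_contra hxω
    have hfr : x ∈ frontier ω := hω.frontier_eq ▸ ⟨hx.1, hxω⟩
    refine hlt.not_ge ((hv.nonpos x ⟨hfr, hx.2⟩ t ht).trans_eq ?_)
    exact (singularBarrier_eq_zero (δ := (infDist · (frontier ω))) hβ (infDist_zero_of_mem hfr)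
      (parabolicCutoff_nonneg hκ a s t₁ x t)).symm
  have hP : parabolicCutoff κ a s t₁ x t ≠ 0 := fun hP => by
    refine hlt.not_ge ((hv.le_profile x ⟨hxω, hx.2⟩ t ht).trans_eq ?_)
    exact (singularBarrier_eq_mul_rpow (δ := (infDist · (frontier ω))) hβ hP).symm
  obtain ⟨hxs, htne⟩ := ne_and_ne_of_parabolicCutoff_ne_zero hP
  have hxball : x ∈ ball a s :=
    mem_ball_iff_norm.2 (lt_of_le_of_ne (mem_closedBall_iff_norm.1 hx.2) hxs)
  refine ⟨inter_mem (mem_of_superset (hω.mem_nhds hxω) subset_closure)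
    (closedBall_mem_nhds_of_mem hxball), lt_of_le_of_ne ht.1 htne.symm,
    hv.isSubsolutionAt x ⟨hxω, hx.2⟩ t ht, hstrict x ⟨hxω, hx.2⟩ t ht hP⟩

lemma exists_cutoff_constant {N θ j₀ : ℝ} (hN : 0 ≤ N) (hθ : 0 < θ) (hj₀ : 0 < j₀) :
    ∃ κ > 0, κ * (16 + 4 * N) * (θ + θ ^ 2) ≤ j₀ := by
  refine ⟨j₀ / ((16 + 4 * N) * (θ + θ ^ 2)), by positivity, le_of_eq ?_⟩
  field_simp

lemma IsBarrierMargin.exists_forall_le_mul_infDist {p β c ι s θ : ℝ}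
    (h : IsBarrierMargin p β c ι) (hs : 0 < s) (hθ : 0 < θ) :
    ∃ K > 0, ∀ (L : ℝ) (ω : Set E) (a : E) (t : ℝ) (v : E → ℝ → ℝ), 2 * s ≤ 1 → 0 ≤ L →
      c * (1 - β) * (2 * s) * (L + 2) ≤ ι → IsOpen ω → a ∈ frontier ω →
      (∀ x ∈ ω ∩ closedBall a s, ∃ ν D,
        HasGradLaplacianAt (fun y => infDist y (frontier ω)) ν D x ∧ ‖ν‖ = 1 ∧ |D| ≤ L) →
      IsProfileSubsolution p β c ω a s (Icc (t - θ) t) v →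
      ∀ x ∈ ω ∩ closedBall a (2 * s / 3), v x t ≤ K * infDist x (frontier ω) := by
  have hc := h.const_pos
  have hι := h.margin_pos
  have hq : 0 < 1 - β := sub_pos.2 h.lt_one
  set γ := (1 - β)⁻¹
  set j := min (min 1 s) (min (ι / (γ * γ)) (ι / c))
  have hj₀ : 0 < j := by positivity
  have hjι : γ * γ * j ≤ ι := by
    rw [← le_div_iff₀' (by positivity)]
    exact (min_le_right _ _).trans (min_le_left _ _)
  obtain ⟨κ, hκ, hκj⟩ :=
    exists_cutoff_constant (N := Module.finrank ℝ E) (Nat.cast_nonneg _) hθ hj₀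
  have hm : 0 < κ * ((s ^ 2 - (2 * s / 3) ^ 2) * θ) ^ 2 := by
    have : 0 < s ^ 2 - (2 * s / 3) ^ 2 := by nlinarith
    positivity
  refine ⟨c * (1 - β) * ((κ * ((s ^ 2 - (2 * s / 3) ^ 2) * θ) ^ 2) ^ γ) ^ (-β), by positivity,
    fun L ω a t v hs₁ hL hsL hω ha hδ hv x hx => ?_⟩
  have hxs : x ∈ closedBall a s := closedBall_subset_closedBall (by linarith) hx.2
  refine (hv.le_singularBarrier hω h.lt_one hκ.le (fun y hy r hr hP => ?_) x
    ⟨subset_closure hx.1, hxs⟩ t ⟨by linarith, le_rfl⟩).trans ?_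
  · exact h.isStrictSupersolutionAt_cutoff hs.le hs₁ hL hsL hκ.le hκj
      ((min_le_left _ _).trans (min_le_left _ _)) ((min_le_left _ _).trans (min_le_right _ _)) hjι
      ((min_le_right _ _).trans (min_le_right _ _)) (hδ y hy) (infDist_frontier_pos hω ha hy.1)
      ((infDist_le_dist_of_mem ha).trans hy.2) (mem_closedBall_iff_norm.1 hy.2) hr.1
      (by linarith [hr.2]) hP
  · refine singularBarrier_le hc.le h.pos.le h.lt_one infDist_nonneg hm ?_
    have hxa : ‖x - a‖ ≤ 2 * s / 3 := mem_closedBall_iff_norm.1 hx.2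
    have hnonneg : 0 ≤ s ^ 2 - (2 * s / 3) ^ 2 := by nlinarith
    rw [parabolicCutoff, sub_sub_cancel]
    gcongr

end BarrierComparison

/-! ### The differential inequality along a normal ray -/

section NormalRay

lemma le_mul_rpow_neg_of_hasDerivAt {g g' : ℝ → ℝ} {r k β : ℝ} (hgc : ContinuousOn g (Ioc 0 r))
    (hg : ∀ s ∈ Ioo 0 r, HasDerivAt g (g' s) s) (hgr : g r < k * r ^ (-β))
    (hcontact : ∀ s ∈ Ioo 0 r, g s = k * s ^ (-β) → -(β * k * s ^ (-β - 1)) < g' s) :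
    ∀ s ∈ Ioo 0 r, g s ≤ k * s ^ (-β) := by
  intro s₀ hs₀
  have hr : 0 < r := hs₀.1.trans hs₀.2
  have hpow : ∀ x > 0, ContinuousAt (fun s : ℝ => k * s ^ (-β)) x := fun x hx =>
    (Real.continuousAt_rpow_const x (-β) (Or.inl hx.ne')).const_mul k
  obtain ⟨r', hr', hgr'⟩ : ∃ r' ∈ Ioo s₀ r, g r' < k * r' ^ (-β) := by
    have hcont : ContinuousWithinAt (fun s => k * s ^ (-β) - g s) (Ioo 0 r) r :=
      (hpow r hr).continuousWithinAt.sub ((hgc r ⟨hr, le_rfl⟩).mono Ioo_subset_Ioc_self)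
    have hev := hcont.eventually (lt_mem_nhds (sub_pos.2 hgr))
    rw [nhdsWithin_Ioo_eq_nhdsLT hr] at hev
    obtain ⟨s, hs, hmem⟩ := (hev.and (Ioo_mem_nhdsLT hs₀.2)).exists
    exact ⟨s, hmem, sub_pos.1 hs⟩
  have hneg : ∀ x ∈ Icc (-r') (-s₀), -x ∈ Ioo 0 r := fun x hx =>
    ⟨by linarith [hx.2, hs₀.1], by linarith [hx.1, hr'.2]⟩
  have hcompare := image_le_of_deriv_right_lt_deriv_boundary' (f := fun x => g (-x))
    (f' := fun x => -g' (-x)) (a := -r') (b := -s₀) (B := fun x => k * (-x) ^ (-β))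
    (B' := fun x => β * k * (-x) ^ (-β - 1))
    (hgc.comp continuous_neg.continuousOn fun x hx => Ioo_subset_Ioc_self (hneg x hx))
    (fun x hx => ?_) (by simpa using hgr'.le)
    (fun x hx => ((hpow (-x) (hneg x hx).1).comp continuousAt_neg).continuousWithinAt)
    (fun x hx => ?_) (fun x hx h => ?_)
  · simpa using @hcompare (-s₀) ⟨by linarith [hr'.1], le_rfl⟩
  · have hd := (hg (-x) (hneg x (Ico_subset_Icc_self hx))).comp x (hasDerivAt_neg x)
    exact (hd.congr_deriv (by ring)).hasDerivWithinAt
  · have hx₀ : -x ≠ 0 := (hneg x (Ico_subset_Icc_self hx)).1.ne'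
    have hd := ((hasDerivAt_neg x).rpow_const (p := -β) (Or.inl hx₀)).const_mul k
    exact (hd.congr_deriv (by ring)).hasDerivWithinAt
  · linarith [hcontact (-x) (hneg x (Ico_subset_Icc_self hx)) h]

lemma abs_le_mul_rpow_neg_of_hasDerivAt {g g' h : ℝ → ℝ} {r k β p ε N : ℝ}
    (hβp : β * p = β + 1) (hk : 0 ≤ k) (hε : 0 ≤ ε) (hmargin : (k + ε) ^ p + N * ε < β * k)
    (hgc : ContinuousOn g (Ioc 0 r)) (hg : ∀ s ∈ Ioo 0 r, HasDerivAt g (g' s) s)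
    (hgr : |g r| < k * r ^ (-β)) (hh₀ : ∀ s ∈ Ioo 0 r, 0 ≤ h s)
    (hh : ∀ s ∈ Ioo 0 r, h s ≤ (|g s| + ε * s ^ (-β)) ^ p)
    (hode : ∀ s ∈ Ioo 0 r, |g' s + h s| ≤ N * ε * s ^ (-(β * p))) :
    ∀ s ∈ Ioo 0 r, |g s| ≤ k * s ^ (-β) := by
  have hexp : -β - 1 = -(β * p) := by linarith
  have hcontact : ∀ s ∈ Ioo 0 r, |g s| = k * s ^ (-β) → |g' s| < β * k * s ^ (-β - 1) := by
    intro s hs hgs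
    have hpos : 0 < s ^ (-(β * p)) := Real.rpow_pos_of_pos hs.1 _
    have hhs : h s ≤ (k + ε) ^ p * s ^ (-(β * p)) := (hh s hs).trans_eq <| by
      rw [hgs, ← add_mul, Real.mul_rpow (by positivity) (Real.rpow_nonneg hs.1.le _),
        ← Real.rpow_mul hs.1.le, neg_mul]
    calc |g' s| ≤ |g' s + h s| + |h s| := by simpa using abs_sub (g' s + h s) (h s)
      _ ≤ N * ε * s ^ (-(β * p)) + (k + ε) ^ p * s ^ (-(β * p)) := by
        rw [abs_of_nonneg (hh₀ s hs)]
        exact add_le_add (hode s hs) hhs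
      _ = ((k + ε) ^ p + N * ε) * s ^ (-(β * p)) := by ring
      _ < β * k * s ^ (-β - 1) := by
        rw [hexp]
        gcongr
  have hprofile : ∀ s ∈ Ioo 0 r, 0 ≤ k * s ^ (-β) := fun s hs =>
    mul_nonneg hk (Real.rpow_nonneg hs.1.le _)
  have hupper := le_mul_rpow_neg_of_hasDerivAt hgc hg ((le_abs_self _).trans_lt hgr)
    fun s hs hgs => (abs_lt.1 (hcontact s hs (by rw [hgs, abs_of_nonneg (hprofile s hs)]))).1
  have hlower := le_mul_rpow_neg_of_hasDerivAt hgc.neg (fun s hs => (hg s hs).neg)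
    ((neg_le_abs _).trans_lt hgr) fun s hs hgs => neg_lt_neg
      (abs_lt.1 (hcontact s hs (by rw [← abs_neg, ← Pi.neg_apply, hgs,
        abs_of_nonneg (hprofile s hs)]))).2
  exact fun s hs => abs_le'.2 ⟨hupper s hs, hlower s hs⟩

lemma le_mul_rpow_of_hasDerivAt_le {w g : ℝ → ℝ} {r c β : ℝ} (hβ : β < 1)
    (hwc : ContinuousOn w (Ico 0 r)) (hw₀ : w 0 = 0) (hw : ∀ s ∈ Ioo 0 r, HasDerivAt w (g s) s)
    (hg : ∀ s ∈ Ioo 0 r, g s ≤ c * (1 - β) * s ^ (-β)) :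
    ∀ s ∈ Ioo 0 r, w s ≤ c * s ^ (1 - β) := by
  intro s hs
  have hq : 0 < 1 - β := sub_pos.2 hβ
  have hderiv : ∀ x ∈ interior (Icc 0 s), HasDerivAt (fun x => c * x ^ (1 - β) - w x)
      (c * (1 - β) * x ^ (-β) - g x) x := fun x hx => by
    rw [interior_Icc] at hx
    refine (((Real.hasDerivAt_rpow_const (p := 1 - β) (Or.inl hx.1.ne')).const_mul c).sub
      (hw x ⟨hx.1, hx.2.trans hs.2⟩)).congr_deriv ?_
    rw [show 1 - β - 1 = -β by ring]
    ring
  have hmono : MonotoneOn (fun x => c * x ^ (1 - β) - w x) (Icc 0 s) := by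
    refine monotoneOn_of_deriv_nonneg (convex_Icc 0 s)
      (((Real.continuous_rpow_const hq.le).const_mul c).continuousOn.sub
        (hwc.mono fun x hx => ⟨hx.1, hx.2.trans_lt hs.2⟩))
      (fun x hx => (hderiv x hx).differentiableAt.differentiableWithinAt) fun x hx => ?_
    rw [(hderiv x hx).deriv]
    rw [interior_Icc] at hx
    exact sub_nonneg.2 (hg x ⟨hx.1, hx.2.trans hs.2⟩)
  have hle := hmono (left_mem_Icc.2 hs.1.le) (right_mem_Icc.2 hs.1.le) hs.1.le
  simpa only [Real.zero_rpow hq.ne', hw₀, mul_zero, sub_zero, sub_nonneg] using hle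

lemma abs_le_mul_rpow_of_abs_hasDerivAt_le {w g : ℝ → ℝ} {r c β : ℝ} (hβ : β < 1)
    (hwc : ContinuousOn w (Ico 0 r)) (hw₀ : w 0 = 0) (hw : ∀ s ∈ Ioo 0 r, HasDerivAt w (g s) s)
    (hg : ∀ s ∈ Ioo 0 r, |g s| ≤ c * (1 - β) * s ^ (-β)) :
    ∀ s ∈ Ioo 0 r, |w s| ≤ c * s ^ (1 - β) := fun s hs => abs_le'.2
  ⟨le_mul_rpow_of_hasDerivAt_le hβ hwc hw₀ hw (fun t ht => (le_abs_self _).trans (hg t ht)) s hs,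
    le_mul_rpow_of_hasDerivAt_le hβ hwc.neg (by simp [hw₀]) (fun t ht => (hw t ht).neg)
      (fun t ht => (neg_le_abs _).trans (hg t ht)) s hs⟩

lemma norm_le_abs_inner_add {g ν : E} {B : ℝ} (hν : ‖ν‖ = 1) (hB : 0 ≤ B)
    (htan : ∀ τ : E, ‖τ‖ = 1 → ⟪τ, ν⟫ = 0 → |⟪g, τ⟫| ≤ B) : ‖g‖ ≤ |⟪g, ν⟫| + B := by
  set y := g - ⟪g, ν⟫ • ν with hy
  have hyν : ⟪y, ν⟫ = 0 := by
    rw [hy, inner_sub_left, real_inner_smul_left, real_inner_self_eq_norm_sq, hν]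
    ring
  have hyB : ‖y‖ ≤ B := by
    rcases eq_or_ne y 0 with h | h
    · rwa [h, norm_zero]
    have hτ := htan (‖y‖⁻¹ • y) (norm_smul_inv_norm h) (by rw [real_inner_smul_left, hyν, mul_zero])
    have hgy : ⟪g, y⟫ = ‖y‖ ^ 2 := by
      rw [← sub_add_cancel g (⟪g, ν⟫ • ν), ← hy, inner_add_left, real_inner_smul_left,
        real_inner_comm y ν, hyν, mul_zero, add_zero, real_inner_self_eq_norm_sq]
    rwa [real_inner_smul_right, hgy, pow_two, inv_mul_cancel_left₀ (norm_ne_zero_iff.2 h),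
      abs_norm] at hτ
  calc ‖g‖ = ‖⟪g, ν⟫ • ν + y‖ := by rw [hy, add_sub_cancel]
    _ ≤ ‖⟪g, ν⟫ • ν‖ + ‖y‖ := norm_add_le _ _
    _ ≤ |⟪g, ν⟫| + B := by
      rw [norm_smul, hν, mul_one, Real.norm_eq_abs]
      gcongr

variable [FiniteDimensional ℝ E]

lemma abs_trace_sub_inner_le (H : E →L[ℝ] E) {ν : E} {B : ℝ} (hν : ‖ν‖ = 1) (hB : 0 ≤ B)
    (htan : ∀ τ : E, ‖τ‖ = 1 → ⟪τ, ν⟫ = 0 → |⟪H τ, τ⟫| ≤ B) :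
    |LinearMap.trace ℝ E H - ⟪H ν, ν⟫| ≤ Module.finrank ℝ E * B := by
  classical
  have hν₀ : ν ≠ 0 := fun h => by simp [h] at hν
  have : Nontrivial E := ⟨ν, 0, hν₀⟩
  obtain ⟨i₀⟩ : Nonempty (Fin (Module.finrank ℝ E)) := ⟨⟨0, Module.finrank_pos⟩⟩
  have hsingle : Orthonormal ℝ (({i₀} : Set _).domRestrict fun _ => ν) :=
    ⟨fun _ => hν, fun i j hij => absurd (Subsingleton.elim i j) hij⟩
  obtain ⟨b, hb⟩ := hsingle.exists_orthonormalBasis_extension_of_card_eq (by simp)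
  have hb₀ : b i₀ = ν := hb i₀ rfl
  rw [LinearMap.trace_eq_sum_inner _ b, ← Finset.add_sum_erase _ _ (Finset.mem_univ i₀), hb₀,
    real_inner_comm, ContinuousLinearMap.coe_coe, add_sub_cancel_left]
  calc |∑ i ∈ Finset.univ.erase i₀, ⟪b i, H (b i)⟫|
      ≤ ∑ i ∈ Finset.univ.erase i₀, |⟪b i, H (b i)⟫| := Finset.abs_sum_le_sum_abs _ _
    _ ≤ ∑ _i ∈ Finset.univ.erase i₀, B := Finset.sum_le_sum fun i hi => by
        rw [real_inner_comm]
        exact htan _ (b.orthonormal.1 i) (hb₀ ▸ b.orthonormal.2 (Finset.ne_of_mem_erase hi))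
    _ ≤ ∑ _i : Fin (Module.finrank ℝ E), B :=
        Finset.sum_le_sum_of_subset_of_nonneg (Finset.erase_subset _ _) fun _ _ _ => hB
    _ = Module.finrank ℝ E * B := by simp

lemma abs_le_mul_rpow_and_norm_le_of_ray {p β c ε r : ℝ} (hp : 1 < p) (hβ : β < 1)
    (hβp : β * p = β + 1) (hc : 0 ≤ c) (hε₀ : 0 ≤ ε) (hε₁ : ε ≤ 1)
    (hmargin : (c * (1 - β) + ε) ^ p + (Module.finrank ℝ E + 1) * ε < β * (c * (1 - β)))
    {ν : E} (hν : ‖ν‖ = 1) {w : ℝ → ℝ} {G : ℝ → E} {H : ℝ → E →L[ℝ] E}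
    (hwc : ContinuousOn w (Ico 0 r)) (hw₀ : w 0 = 0) (hw : ∀ s ∈ Ioo 0 r, HasDerivAt w ⟪G s, ν⟫ s)
    (hGc : ContinuousOn G (Ioc 0 r)) (hG : ∀ s ∈ Ioo 0 r, HasDerivAt G (H s ν) s)
    (hpde : ∀ s ∈ Ioo 0 r, |LinearMap.trace ℝ E (H s) + ‖G s‖ ^ p| ≤ ε * s ^ (-(β * p)))
    (htan : ∀ s ∈ Ioo 0 r, ∀ τ, ‖τ‖ = 1 → ⟪τ, ν⟫ = 0 →
      |⟪G s, τ⟫| ^ p + |⟪H s τ, τ⟫| ≤ ε ^ p * s ^ (-(β * p)))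
    (hend : |⟪G r, ν⟫| < c * (1 - β) * r ^ (-β)) :
    ∀ s ∈ Ioo 0 r, |w s| ≤ c * s ^ (1 - β) ∧ ‖G s‖ ≤ (c * (1 - β) + ε) * s ^ (-β) := by
  have hp₀ : 0 < p := by linarith
  have hεp : ε ^ p ≤ ε := Real.rpow_le_self_of_le_one hε₀ hε₁ hp.le
  have hnorm : ∀ s ∈ Ioo 0 r, ‖G s‖ ≤ |⟪G s, ν⟫| + ε * s ^ (-β) := fun s hs => by
    have hs₀ : 0 ≤ s ^ (-β) := Real.rpow_nonneg hs.1.le _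
    refine norm_le_abs_inner_add hν (by positivity) fun τ hτ hτν => ?_
    rw [← Real.rpow_le_rpow_iff (abs_nonneg _) (by positivity) hp₀, Real.mul_rpow hε₀ hs₀,
      ← Real.rpow_mul hs.1.le, neg_mul]
    linarith [htan s hs τ hτ hτν, abs_nonneg ⟪H s τ, τ⟫]
  have hode : ∀ s ∈ Ioo 0 r, |⟪H s ν, ν⟫ + ‖G s‖ ^ p| ≤
      (Module.finrank ℝ E + 1) * ε * s ^ (-(β * p)) := fun s hs => by
    have hs₀ : 0 ≤ s ^ (-(β * p)) := Real.rpow_nonneg hs.1.le _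
    have htrace := abs_trace_sub_inner_le (H s) hν (mul_nonneg hε₀ hs₀) fun τ hτ hτν => by
      have hle : ε ^ p * s ^ (-(β * p)) ≤ ε * s ^ (-(β * p)) := by gcongr
      linarith [htan s hs τ hτ hτν, Real.rpow_nonneg (abs_nonneg ⟪G s, τ⟫) p]
    have hsub := abs_sub (LinearMap.trace ℝ E (H s) + ‖G s‖ ^ p)
      (LinearMap.trace ℝ E (H s) - ⟪H s ν, ν⟫)
    rw [show LinearMap.trace ℝ E (H s) + ‖G s‖ ^ p - (LinearMap.trace ℝ E (H s) - ⟪H s ν, ν⟫) =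
      ⟪H s ν, ν⟫ + ‖G s‖ ^ p by ring] at hsub
    linarith [hpde s hs]
  have hnormal : ∀ s ∈ Ioo 0 r, |⟪G s, ν⟫| ≤ c * (1 - β) * s ^ (-β) :=
    abs_le_mul_rpow_neg_of_hasDerivAt hβp (mul_nonneg hc (sub_pos.2 hβ).le) hε₀ hmargin
      (hGc.inner continuousOn_const)
      (fun s hs => ((hG s hs).inner ℝ (hasDerivAt_const s ν)).congr_deriv (by simp)) hend
      (fun s _ => by positivity) (fun s hs => Real.rpow_le_rpow (norm_nonneg _) (hnorm s hs) hp₀.le)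
      hode
  exact fun s hs => ⟨abs_le_mul_rpow_of_abs_hasDerivAt_le hβ hwc hw₀ hw hnormal s hs,
    by linarith [hnorm s hs, hnormal s hs]⟩

end NormalRay

/-! ### The distance to the boundary -/

section DistanceToFrontier

variable {V : Type*} [NormedAddCommGroup V] [NormedSpace ℝ V]

lemma ball_infDist_frontier_subset {ω : Set V} {x : V} (hω : IsOpen ω) (hx : x ∈ ω) :
    ball x (infDist x (frontier ω)) ⊆ ω := by
  rcases le_or_gt (infDist x (frontier ω)) 0 with h | h
  · simp [ball_eq_empty.2 h]
  refine (convex_ball x _).isPreconnected.subset_left_of_subset_union hω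
    isClosed_closure.isOpen_compl (disjoint_compl_right.mono_left subset_closure)
    (fun y hy => ?_) ⟨x, mem_ball_self h, hx⟩
  by_contra hyω
  rw [mem_union, not_or, notMem_compl_iff, and_comm, ← Set.mem_sdiff, ← hω.frontier_eq] at hyω
  exact (infDist_le_dist_of_mem hyω).not_gt (by rwa [dist_comm])

lemma mem_inter_and_infDist_le_of_mem_closedBall {ω : Set V} {a x y : V} {s ρ : ℝ}
    (hω : IsOpen ω) (ha : a ∈ frontier ω) (hx : x ∈ ball a s ∩ ω)
    (hρ : ρ ≤ infDist x (frontier ω) / 2) (hy : y ∈ closedBall x ρ) :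
    y ∈ ball a (2 * s) ∩ ω ∧ infDist x (frontier ω) ≤ 2 * infDist y (frontier ω) ∧
      infDist y (frontier ω) ≤ 2 * infDist x (frontier ω) := by
  have hpos := infDist_frontier_pos hω ha hx.2
  have hle : infDist x (frontier ω) ≤ dist x a := infDist_le_dist_of_mem ha
  have hxa := mem_ball.1 hx.1
  have hyx := mem_closedBall.1 hy
  have htri := dist_triangle y x a
  have h₁ := infDist_le_infDist_add_dist (s := frontier ω) (x := x) (y := y)
  have h₂ := infDist_le_infDist_add_dist (s := frontier ω) (x := y) (y := x)
  rw [dist_comm] at h₁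
  exact ⟨⟨mem_ball.2 (by linarith),
    ball_infDist_frontier_subset hω hx.2 (mem_ball.2 (by linarith))⟩, by linarith, by linarith⟩

lemma infDist_add_smul_eq {F : Set V} {b ν : V} {s t : ℝ} (hb : b ∈ F) (hν : ‖ν‖ = 1)
    (hs : infDist (b + s • ν) F = s) (ht : t ∈ Icc 0 s) : infDist (b + t • ν) F = t := by
  apply le_antisymm
  · refine (infDist_le_dist_of_mem hb).trans_eq ?_
    rw [dist_self_add_left, norm_smul, hν, mul_one, Real.norm_of_nonneg ht.1]
  · have hlip := infDist_le_infDist_add_dist (s := F) (x := b + s • ν) (y := b + t • ν)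
    rw [hs, dist_add_left, dist_eq_norm, ← sub_smul, norm_smul, hν, mul_one,
      Real.norm_of_nonneg (sub_nonneg.2 ht.2)] at hlip
    linarith

lemma hasGradientAt_infDist_of_infDist_add_smul_eq [CompleteSpace E] {F : Set E} {b ν : E} {s : ℝ}
    (hb : b ∈ F) (hν : ‖ν‖ = 1) (hs : 0 < s) (hbs : infDist (b + s • ν) F = s)
    (hdiff : DifferentiableAt ℝ (infDist · F) (b + s • ν)) :
    HasGradientAt (infDist · F) ν (b + s • ν) := by
  have hgrad := hdiff.hasGradientAt
  set g := gradient (infDist · F) (b + s • ν)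
  have hg : ‖g‖ ≤ 1 := by
    simpa using hgrad.hasFDerivAt.le_of_lipschitz (lipschitz_infDist_pt F)
  have hray : HasDerivAt (fun t : ℝ => b + t • ν) ν s := by
    simpa using ((hasDerivAt_id s).smul_const ν).const_add b
  have hderiv : HasDerivAt (fun t : ℝ => infDist (b + t • ν) F) ⟪g, ν⟫ s :=
    (hgrad.hasFDerivAt.comp_hasDerivAt (f := fun t : ℝ => b + t • ν) s hray).congr_deriv (by simp)
  have hid : HasDerivWithinAt (fun t : ℝ => infDist (b + t • ν) F) 1 (Icc 0 s) s :=
    (hasDerivWithinAt_id s _).congr (fun t ht => infDist_add_smul_eq hb hν hbs ht) hbs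
  have hgν : ⟪g, ν⟫ = 1 := (uniqueDiffOn_Icc hs s ⟨hs.le, le_rfl⟩).eq_deriv _
    hderiv.hasDerivWithinAt hid
  have hg₁ : ‖g‖ = 1 := hg.antisymm <| by simpa [hgν, hν] using real_inner_le_norm g ν
  rwa [(inner_eq_one_iff_of_norm_eq_one hg₁ hν).1 hgν] at hgrad

/-- The segment of length `s` leaving `b` in the unit direction `ν` runs inside `D` and is traversed
at unit speed by the distance to `F`; for `F = ∂ω` and `D ⊆ ω` this makes `ν` an inward normal
at `b`. -/
structure IsDistRay (F D : Set E) (b ν : E) (s : ℝ) : Prop where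
  base_mem : b ∈ F
  norm_eq : ‖ν‖ = 1
  pos : 0 < s
  add_smul_mem : ∀ t ∈ Ioo 0 s, b + t • ν ∈ D
  infDist_add_smul : ∀ t ∈ Ioo 0 s, infDist (b + t • ν) F = t

namespace IsDistRay

variable {F D u : Set E} {b ν : E} {s t : ℝ}

lemma mono {D' : Set E} (h : IsDistRay F D b ν s) (hD : D ⊆ D') : IsDistRay F D' b ν s :=
  { h with add_smul_mem := fun t ht => hD (h.add_smul_mem t ht) }

lemma hasGradientAt [CompleteSpace E] (h : IsDistRay F D b ν s) (ht : t ∈ Ioo 0 s)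
    (hF : DifferentiableAt ℝ (infDist · F) (b + t • ν)) :
    HasGradientAt (infDist · F) ν (b + t • ν) :=
  hasGradientAt_infDist_of_infDist_add_smul_eq h.base_mem h.norm_eq ht.1
    (h.infDist_add_smul t ht) hF

lemma tendsto (h : IsDistRay F D b ν s) : Tendsto (fun t : ℝ => b + t • ν) (𝓝[>] 0) (𝓝[D] b) :=
  tendsto_nhdsWithin_iff.2
    ⟨(Continuous.tendsto' (by fun_prop) _ _ (by simp)).mono_left nhdsWithin_le_nhds,
      eventually_of_mem (Ioo_mem_nhdsGT h.pos) h.add_smul_mem⟩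

lemma mem_closure (h : IsDistRay F D b ν s) : b ∈ closure D :=
  mem_closure_of_tendsto (h.tendsto.mono_right nhdsWithin_le_nhds)
    (eventually_of_mem (Ioo_mem_nhdsGT h.pos) h.add_smul_mem)

-- The gradient of `infDist · F` is constantly `ν` along the ray, hence its limit at `b` is `ν`.
lemma fderiv_eq_toDual [CompleteSpace E] {f' : E → StrongDual ℝ E} (h : IsDistRay F D b ν s)
    (hD : IsOpen D) (hu : u ∈ 𝓝[D] b)
    (hf' : ∀ x ∈ u, HasFDerivWithinAt (infDist · F) (f' x) u x) (hb : ContinuousWithinAt f' u b) :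
    f' b = InnerProductSpace.toDual ℝ E ν := by
  have hlim : Tendsto (fun t : ℝ => f' (b + t • ν)) (𝓝[>] 0) (𝓝 (f' b)) :=
    hb.tendsto.comp (h.tendsto.mono_right (nhdsWithin_le_of_mem hu))
  refine tendsto_nhds_unique hlim (tendsto_const_nhds.congr' ?_)
  filter_upwards [h.tendsto (eventually_eventually_nhdsWithin.2 hu),
    Ioo_mem_nhdsGT h.pos] with t hut ht
  have hu' : u ∈ 𝓝 (b + t • ν) := by
    rwa [mem_preimage, mem_ofPred, hD.nhdsWithin_eq (h.add_smul_mem t ht)] at hut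
  have hfd := (hf' _ (mem_of_mem_nhds hu')).hasFDerivAt hu'
  exact (h.hasGradientAt ht hfd.differentiableAt).hasFDerivAt.unique hfd

lemma eq_of_contDiffOn [CompleteSpace E] {ν' : E} {s' : ℝ} (h : IsDistRay F D b ν s)
    (h' : IsDistRay F D b ν' s') (hD : IsOpen D)
    (hF : ContDiffOn ℝ 1 (infDist · F) (closure D)) : ν = ν' := by
  obtain ⟨u, hu, -, f', hf', hcont⟩ := (contDiffWithinAt_succ_iff_hasFDerivWithinAt (n := 0)
    (by simp)).1 (by simpa using hF b h.mem_closure)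
  rw [insert_eq_of_mem h.mem_closure] at hu
  have huD : u ∈ 𝓝[D] b := nhdsWithin_mono b subset_closure hu
  exact (InnerProductSpace.toDual ℝ E).injective <|
    (h.fderiv_eq_toDual hD huD hf' hcont.continuousWithinAt).symm.trans
      (h'.fderiv_eq_toDual hD huD hf' hcont.continuousWithinAt)

end IsDistRay

end DistanceToFrontier

section NormalCollar

variable [FiniteDimensional ℝ E]

/-- The boundary of the open set `ω` has a collar of width `R` near `a ∈ ∂ω`: the distance to `∂ω`
is `C²` up to the boundary with Laplacian at most `L`, and `ν` is a field of inward unit normals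
along which it grows at unit speed up to the value `R`. -/
structure IsNormalCollar (ω : Set E) (a : E) (R L : ℝ) (ν : E → E) : Prop where
  isOpen : IsOpen ω
  mem_frontier : a ∈ frontier ω
  contDiffOn : ContDiffOn ℝ 2 (infDist · (frontier ω)) (closure (ball a (2 * R) ∩ ω))
  abs_laplacian_le : ∀ x ∈ ball a (2 * R) ∩ ω, |Δ (infDist · (frontier ω)) x| ≤ L
  norm_normal : ∀ b ∈ ball a R ∩ frontier ω, ‖ν b‖ = 1
  add_smul_mem : ∀ b ∈ ball a R ∩ frontier ω, ∀ s ∈ Ioo 0 R, b + s • ν b ∈ ω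
  infDist_add_smul : ∀ b ∈ ball a R ∩ frontier ω, ∀ s ∈ Ioo 0 R,
    infDist (b + s • ν b) (frontier ω) = s

lemma exists_isDistRay_of_notMem {F : Set E} {x : E} (hF : IsClosed F) (hne : F.Nonempty)
    (hx : x ∉ F) : ∃ b ν, IsDistRay F (ball x (infDist x F)) b ν (infDist x F) ∧
      x = b + infDist x F • ν := by
  obtain ⟨b, hb, hbx⟩ := hF.exists_infDist_eq_dist hne x
  have hpos : 0 < infDist x F := (hF.notMem_iff_infDist_pos hne).1 hx
  set d := infDist x F
  obtain ⟨ν, hν, hxb⟩ : ∃ ν, ‖ν‖ = 1 ∧ b + d • ν = x := by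
    refine ⟨d⁻¹ • (x - b), ?_, by rw [smul_inv_smul₀ hpos.ne', add_sub_cancel]⟩
    rw [norm_smul, norm_inv, Real.norm_of_nonneg hpos.le, ← dist_eq_norm, ← hbx,
      inv_mul_cancel₀ hpos.ne']
  refine ⟨b, ν, ⟨hb, hν, hpos, fun t ht => ?_, fun t ht =>
    infDist_add_smul_eq hb hν (by rw [hxb]) (Ioo_subset_Icc_self ht)⟩, hxb.symm⟩
  calc dist (b + t • ν) x = dist (b + t • ν) (b + d • ν) := by rw [hxb]
    _ = d - t := by
      rw [dist_add_left, dist_eq_norm, ← sub_smul, norm_smul, hν, mul_one, Real.norm_eq_abs,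
        abs_sub_comm, abs_of_pos (sub_pos.2 ht.2)]
    _ < d := sub_lt_self d ht.1

namespace IsNormalCollar

variable {ω : Set E} {a b x : E} {R L s σ : ℝ} {ν : E → E}

lemma of_abs_sum_fderiv_le {ι : Type*} [Fintype ι] (e : OrthonormalBasis ι ℝ E) (hω : IsOpen ω)
    (ha : a ∈ frontier ω)
    (hδ : ContDiffOn ℝ 2 (infDist · (frontier ω)) (closure (ball a (2 * R) ∩ ω)))
    (hL : ∀ x ∈ ball a (2 * R) ∩ ω,
      |∑ i, fderiv ℝ (fun y => fderiv ℝ (infDist · (frontier ω)) y (e i)) x (e i)| ≤ L)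
    (hν : ∀ b ∈ ball a R ∩ frontier ω, ‖ν b‖ = 1 ∧
      ∀ s ∈ Ioo 0 R, b + s • ν b ∈ ω ∧ infDist (b + s • ν b) (frontier ω) = s) :
    IsNormalCollar ω a R L ν where
  isOpen := hω
  mem_frontier := ha
  contDiffOn := hδ
  abs_laplacian_le x hx := by
    rw [laplacian_eq_sum_fderiv_fderiv e (hδ.contDiffAt
      (mem_of_superset ((isOpen_ball.inter hω).mem_nhds hx) subset_closure))]
    exact hL x hx
  norm_normal b hb := (hν b hb).1
  add_smul_mem b hb s hs := ((hν b hb).2 s hs).1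
  infDist_add_smul b hb s hs := ((hν b hb).2 s hs).2

lemma add_smul_mem_inter (h : IsNormalCollar ω a R L ν) (hb : b ∈ ball a R ∩ frontier ω)
    (hs : s ∈ Ioo 0 R) : b + s • ν b ∈ ball a (2 * R) ∩ ω := by
  refine ⟨?_, h.add_smul_mem b hb s hs⟩
  have hle : dist (b + s • ν b) b = s := by
    rw [dist_self_add_left, norm_smul, h.norm_normal b hb, mul_one, Real.norm_of_nonneg hs.1.le]
  rw [mem_ball]
  linarith [dist_triangle (b + s • ν b) b a, hs.2, mem_ball.1 hb.1]

lemma isDistRay (h : IsNormalCollar ω a R L ν) (hb : b ∈ ball a R ∩ frontier ω) :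
    IsDistRay (frontier ω) (ball a (2 * R) ∩ ω) b (ν b) R where
  base_mem := hb.2
  norm_eq := h.norm_normal b hb
  pos := pos_of_mem_ball hb.1
  add_smul_mem _ hs := h.add_smul_mem_inter hb hs
  infDist_add_smul := h.infDist_add_smul b hb

lemma add_smul_mem_closure (h : IsNormalCollar ω a R L ν) (hb : b ∈ ball a R ∩ frontier ω)
    (hs : s ∈ Icc 0 R) : b + s • ν b ∈ closure (ball a (2 * R) ∩ ω) := by
  rw [← closure_Ioo (pos_of_mem_ball hb.1).ne] at hs
  exact map_mem_closure (f := fun s : ℝ => b + s • ν b) (by fun_prop) hs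
    fun t ht => h.add_smul_mem_inter hb ht

lemma infDist_lt (h : IsNormalCollar ω a R L ν) (hx : x ∈ ball a σ) :
    infDist x (frontier ω) < σ :=
  (infDist_le_dist_of_mem h.mem_frontier).trans_lt hx

-- The nearest boundary point spans a ray to `x`, whose direction must be the normal.
lemma exists_eq_add_smul (h : IsNormalCollar ω a R L ν) (hσ : σ ≤ R)
    (hx : x ∈ ball a (σ / 2) ∩ ω) :
    ∃ b ∈ ball a σ ∩ frontier ω, x = b + infDist x (frontier ω) • ν b := by
  have hxF : x ∉ frontier ω := fun hF => (h.isOpen.frontier_eq ▸ hF).2 hx.2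
  obtain ⟨b, ν', hray, hxb⟩ := exists_isDistRay_of_notMem isClosed_frontier ⟨a, h.mem_frontier⟩ hxF
  have hd := h.infDist_lt hx.1
  have hxa := mem_ball.1 hx.1
  have hbx : dist b x = infDist x (frontier ω) := by
    nth_rw 1 [hxb]
    rw [dist_self_add_right, norm_smul, hray.norm_eq, mul_one, Real.norm_of_nonneg infDist_nonneg]
  have hb : b ∈ ball a σ := by
    rw [mem_ball]
    linarith [dist_triangle b x a]
  have hbR : b ∈ ball a R ∩ frontier ω := ⟨ball_subset_ball hσ hb, hray.base_mem⟩
  have hsub : ball x (infDist x (frontier ω)) ⊆ ball a (2 * R) ∩ ω := fun y hy =>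
    ⟨mem_ball.2 (by
      linarith [dist_triangle y x a, mem_ball.1 hy, pos_of_mem_ball hbR.1]),
      ball_infDist_frontier_subset h.isOpen hx.2 hy⟩
  have hνν' := (hray.mono hsub).eq_of_contDiffOn (h.isDistRay hbR) (isOpen_ball.inter h.isOpen)
    (h.contDiffOn.of_le one_le_two)
  exact ⟨b, ⟨hb, hray.base_mem⟩, by rwa [← hνν']⟩

lemma contDiffAt (h : IsNormalCollar ω a R L ν) (hx : x ∈ ball a (2 * R) ∩ ω) :
    ContDiffAt ℝ 2 (infDist · (frontier ω)) x :=
  h.contDiffOn.contDiffAt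
    (mem_of_superset ((isOpen_ball.inter h.isOpen).mem_nhds hx) subset_closure)

lemma gradient_infDist (h : IsNormalCollar ω a R L ν) (hb : b ∈ ball a R ∩ frontier ω)
    (hs : s ∈ Ioo 0 R) : gradient (infDist · (frontier ω)) (b + s • ν b) = ν b :=
  ((h.isDistRay hb).hasGradientAt hs
    ((h.contDiffAt (h.add_smul_mem_inter hb hs)).differentiableAt two_ne_zero)).gradient

lemma exists_hasGradLaplacianAt (h : IsNormalCollar ω a R L ν) (hx : x ∈ ball a (R / 2) ∩ ω) :
    ∃ g l, HasGradLaplacianAt (infDist · (frontier ω)) g l x ∧ ‖g‖ = 1 ∧ |l| ≤ L := by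
  obtain ⟨b, hb, hxb⟩ := h.exists_eq_add_smul le_rfl hx
  have hpos := infDist_frontier_pos h.isOpen h.mem_frontier hx.2
  have hd : infDist x (frontier ω) ∈ Ioo 0 R :=
    ⟨hpos, by linarith [h.infDist_lt hx.1]⟩
  have hxD : x ∈ ball a (2 * R) ∩ ω := hxb ▸ h.add_smul_mem_inter hb hd
  refine ⟨_, _, hasGradLaplacianAt_of_contDiffAt (h.contDiffAt hxD), ?_, h.abs_laplacian_le x hxD⟩
  nth_rw 1 [hxb]
  rw [h.gradient_infDist hb hd, h.norm_normal b hb]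

end IsNormalCollar

end NormalCollar

/-! ### Estimates for solutions near the boundary -/

section BoundaryEstimates

variable [FiniteDimensional ℝ E]

/-- `v` is a classical solution of `vₜ - Δv = |∇v|ᵖ` on `D × I` with `|vₜ| ≤ M`, vanishing on
`S × I`; `G`, `H` and `v'` are its spatial gradient, spatial Hessian and time derivative. Of the
derivatives only `G` is asked to be continuous up to the boundary of `D`. -/
structure IsDirichletSolution (p M : ℝ) (D S : Set E) (I : Set ℝ) (v : E → ℝ → ℝ)
    (G : E → ℝ → E) (H : E → ℝ → E →L[ℝ] E) (v' : E → ℝ → ℝ) : Prop where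
  continuousOn : ContinuousOn (fun q : E × ℝ => v q.1 q.2) (closure D ×ˢ I)
  continuousOn_gradient : ∀ t ∈ I, ContinuousOn (G · t) (closure D)
  hasDerivAt : ∀ x ∈ D, ∀ t ∈ I, HasDerivAt (v x) (v' x t) t
  hasGradientAt : ∀ x ∈ D, ∀ t ∈ I, HasGradientAt (v · t) (G x t) x
  hasFDerivAt : ∀ x ∈ D, ∀ t ∈ I, HasFDerivAt (G · t) (H x t) x
  sub_trace_eq : ∀ x ∈ D, ∀ t ∈ I, v' x t - LinearMap.trace ℝ E (H x t) = ‖G x t‖ ^ p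
  abs_le : ∀ x ∈ D, ∀ t ∈ I, |v' x t| ≤ M
  eq_zero : ∀ x ∈ S, ∀ t ∈ I, v x t = 0

namespace IsDirichletSolution

variable {p M t : ℝ} {D S : Set E} {I : Set ℝ} {v v' : E → ℝ → ℝ} {G : E → ℝ → E}
  {H : E → ℝ → E →L[ℝ] E} {x : E}

lemma of_closure {ι : Type*} [Fintype ι] (b : OrthonormalBasis ι ℝ E) {T₁ T₂ : ℝ} (hD : IsOpen D)
    (hcont : ContinuousOn (fun q : E × ℝ => (v q.1 q.2, G q.1 q.2)) (closure D ×ˢ Icc T₁ T₂))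
    (hG : ∀ t ∈ Icc T₁ T₂, ∀ x ∈ closure D, HasGradientWithinAt (v · t) (G x t) (closure D) x)
    (hH : ∀ t ∈ Icc T₁ T₂, ∀ x ∈ closure D, HasFDerivWithinAt (G · t) (H x t) (closure D) x)
    (hv' : ∀ x ∈ closure D, ∀ t ∈ Icc T₁ T₂, HasDerivWithinAt (v x) (v' x t) (Icc T₁ T₂) t)
    (hpde : ∀ x ∈ D, ∀ t ∈ Ioo T₁ T₂, v' x t - ∑ i, ⟪H x t (b i), b i⟫ = ‖G x t‖ ^ p)
    (hzero : ∀ x ∈ S, ∀ t ∈ Ioo T₁ T₂, v x t = 0)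
    (hM : ∀ x ∈ D, ∀ t ∈ Ioo T₁ T₂, |v' x t| ≤ M) :
    IsDirichletSolution p M D S (Ioo T₁ T₂) v G H v' where
  continuousOn := hcont.fst.mono (prod_mono_right Ioo_subset_Icc_self)
  continuousOn_gradient t ht := hcont.snd.comp (f := fun x => (x, t)) (by fun_prop) fun x hx =>
    ⟨hx, Ioo_subset_Icc_self ht⟩
  hasDerivAt x hx t ht :=
    (hv' x (subset_closure hx) t (Ioo_subset_Icc_self ht)).hasDerivAt (Icc_mem_nhds ht.1 ht.2)
  hasGradientAt x hx t ht :=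
    hasGradientAt_iff_hasFDerivAt.2 <|
      (hG t (Ioo_subset_Icc_self ht) x (subset_closure hx)).hasFDerivWithinAt.hasFDerivAt
        (mem_of_superset (hD.mem_nhds hx) subset_closure)
  hasFDerivAt x hx t ht := (hH t (Ioo_subset_Icc_self ht) x (subset_closure hx)).hasFDerivAt
    (mem_of_superset (hD.mem_nhds hx) subset_closure)
  sub_trace_eq x hx t ht := by
    rw [LinearMap.trace_eq_sum_inner _ b, ← hpde x hx t ht]
    simp only [real_inner_comm, ContinuousLinearMap.coe_coe]
  abs_le := hM
  eq_zero := hzero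

lemma hasParabolicJetAt (h : IsDirichletSolution p M D S I v G H v') (hD : IsOpen D) (hx : x ∈ D)
    (ht : t ∈ I) :
    HasParabolicJetAt v (v' x t) (G x t) (LinearMap.trace ℝ E (H x t)) x t :=
  ⟨h.hasDerivAt x hx t ht, (G · t), H x t,
    eventually_of_mem (hD.mem_nhds hx) fun y hy => h.hasGradientAt y hy t ht,
    h.hasFDerivAt x hx t ht, rfl, rfl⟩

lemma isSubsolutionAt (h : IsDirichletSolution p M D S I v G H v') (hD : IsOpen D) (hx : x ∈ D)
    (ht : t ∈ I) : IsSubsolutionAt p v x t :=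
  ⟨_, _, _, h.hasParabolicJetAt hD hx ht, (h.sub_trace_eq x hx t ht).le⟩

lemma isSubsolutionAt_neg (h : IsDirichletSolution p M D S I v G H v') (hD : IsOpen D)
    (hx : x ∈ D) (ht : t ∈ I) : IsSubsolutionAt p (fun y s => -1 * v y s) x t := by
  refine ⟨_, _, _, (h.hasParabolicJetAt hD hx ht).const_mul (-1), ?_⟩
  rw [norm_smul, norm_neg, norm_one, one_mul]
  linarith [h.sub_trace_eq x hx t ht, Real.rpow_nonneg (norm_nonneg (G x t)) p]

end IsDirichletSolution

variable {p M β c ε r R L σ θ t T : ℝ} {ω : Set E} {a : E} {ν : E → E} {I : Set ℝ}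
  {v v' : E → ℝ → ℝ} {G : E → ℝ → E} {H : E → ℝ → E →L[ℝ] E}

lemma IsDirichletSolution.abs_le_mul_rpow_and_norm_le
    (hv : IsDirichletSolution p M (ball a (2 * R) ∩ ω) (ball a R ∩ frontier ω) I v G H v')
    (hω : IsNormalCollar ω a R L ν) (hβ : IsBarrierMargin p β c ε)
    (hmargin : (c * (1 - β) + ε) ^ p + (Module.finrank ℝ E + 1) * ε < β * (c * (1 - β)))
    (hrR : r ≤ R) (hσr : σ ≤ r) (hM : ∀ s ∈ Ioo 0 r, M ≤ ε * s ^ (-(β * p)))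
    (htan : ∀ x ∈ ball a (2 * R) ∩ ω, infDist x (frontier ω) ∈ Ioo 0 r → ∀ t ∈ I,
      ∀ τ : E, ‖τ‖ = 1 → ⟪τ, gradient (infDist · (frontier ω)) x⟫ = 0 →
        |⟪G x t, τ⟫| ^ p + |⟪H x t τ, τ⟫| ≤ ε ^ p * infDist x (frontier ω) ^ (-(β * p)))
    (hend : ∀ b ∈ ball a σ ∩ frontier ω, ∀ t ∈ I,
      |⟪G (b + r • ν b) t, ν b⟫| < c * (1 - β) * r ^ (-β)) :
    ∀ x ∈ ball a (σ / 2) ∩ ω, ∀ t ∈ I,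
      |v x t| ≤ c * infDist x (frontier ω) ^ (1 - β) ∧
        ‖G x t‖ ≤ (c * (1 - β) + ε) * infDist x (frontier ω) ^ (-β) := by
  intro x hx t ht
  obtain ⟨b, hb, hxb⟩ := hω.exists_eq_add_smul (hσr.trans hrR) hx
  have hbR : b ∈ ball a R ∩ frontier ω := ⟨ball_subset_ball (hσr.trans hrR) hb.1, hb.2⟩
  have hpos := infDist_frontier_pos hω.isOpen hω.mem_frontier hx.2
  have hlt : infDist x (frontier ω) < r := by linarith [hω.infDist_lt hx.1]
  have hIoo : ∀ s ∈ Ioo 0 r, s ∈ Ioo 0 R := fun s hs => ⟨hs.1, hs.2.trans_le hrR⟩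
  have hmem : ∀ s ∈ Ioo 0 r, b + s • ν b ∈ ball a (2 * R) ∩ ω := fun s hs =>
    hω.add_smul_mem_inter hbR (hIoo s hs)
  have hline : Continuous fun s : ℝ => b + s • ν b := by fun_prop
  have hline' : ∀ s, HasDerivAt (fun s : ℝ => b + s • ν b) (ν b) s := fun s => by
    simpa using ((hasDerivAt_id s).smul_const (ν b)).const_add b
  have hray := abs_le_mul_rpow_and_norm_le_of_ray (w := fun s => v (b + s • ν b) t)
    (G := fun s => G (b + s • ν b) t) (H := fun s => H (b + s • ν b) t) (r := r) hβ.one_lt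
    hβ.lt_one hβ.mul_eq hβ.const_pos.le hβ.margin_pos.le hβ.margin_lt_one.le hmargin
    (hω.norm_normal b hbR) ?_ (by simpa using hv.eq_zero b hbR t ht) (fun s hs => ?_) ?_
    (fun s hs => (hv.hasFDerivAt _ (hmem s hs) t ht).comp_hasDerivAt
      (f := fun s : ℝ => b + s • ν b) s (hline' s))
    (fun s hs => ?_) (fun s hs τ hτ hτν => ?_) (hend b hb t ht) _ ⟨hpos, hlt⟩
  · simpa only [← hxb] using hray
  · exact hv.continuousOn.comp (hline.prodMk continuous_const).continuousOn fun s hs =>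
      ⟨hω.add_smul_mem_closure hbR ⟨hs.1, hs.2.le.trans hrR⟩, ht⟩
  · exact ((hv.hasGradientAt _ (hmem s hs) t ht).hasFDerivAt.comp_hasDerivAt
      (f := fun s : ℝ => b + s • ν b) s (hline' s)).congr_deriv (by simp)
  · exact (hv.continuousOn_gradient t ht).comp hline.continuousOn fun s hs =>
      hω.add_smul_mem_closure hbR ⟨hs.1.le, hs.2.trans hrR⟩
  · rw [← hv.sub_trace_eq _ (hmem s hs) t ht, add_sub_cancel]
    exact (hv.abs_le _ (hmem s hs) t ht).trans (hM s hs)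
  · have hs' := hω.infDist_add_smul b hbR s (hIoo s hs)
    have htans := htan _ (hmem s hs) (by rwa [hs']) t ht τ hτ
      (by rwa [hω.gradient_infDist hbR (hIoo s hs)])
    rwa [hs'] at htans

lemma IsDirichletSolution.isProfileSubsolution {s : ℝ} {J : Set ℝ}
    (hv : IsDirichletSolution p M (ball a (2 * R) ∩ ω) (ball a R ∩ frontier ω) I v G H v')
    (hω : IsOpen ω) (hs : 0 ≤ s) (hsR : s < R) (hJ : J ⊆ I)
    (hprofile : ∀ x ∈ ω ∩ closedBall a s, ∀ t ∈ I,
      |v x t| ≤ c * infDist x (frontier ω) ^ (1 - β)) :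
    IsProfileSubsolution p β c ω a s J v ∧
      IsProfileSubsolution p β c ω a s J (fun y s => -1 * v y s) := by
  have hball : closedBall a s ⊆ ball a (2 * R) := closedBall_subset_ball (by linarith)
  have hD : IsOpen (ball a (2 * R) ∩ ω) := isOpen_ball.inter hω
  have hmem : ∀ x ∈ ω ∩ closedBall a s, x ∈ ball a (2 * R) ∩ ω := fun x hx => ⟨hball hx.2, hx.1⟩
  have hcont : ContinuousOn (fun z : E × ℝ => v z.1 z.2) ((closure ω ∩ closedBall a s) ×ˢ J) :=
    hv.continuousOn.mono <| prod_mono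
      (fun x hx => isOpen_ball.inter_closure ⟨hball hx.2, hx.1⟩) hJ
  have hzero : ∀ x ∈ frontier ω ∩ closedBall a s, ∀ t ∈ J, v x t = 0 := fun x hx t ht =>
    hv.eq_zero x ⟨closedBall_subset_ball hsR hx.2, hx.1⟩ t (hJ ht)
  exact ⟨⟨hcont, fun x hx t ht => hv.isSubsolutionAt hD (hmem x hx) (hJ ht),
      fun x hx t ht => (hzero x hx t ht).le,
      fun x hx t ht => (le_abs_self _).trans (hprofile x hx t (hJ ht))⟩,
    ⟨continuousOn_const.mul hcont, fun x hx t ht => hv.isSubsolutionAt_neg hD (hmem x hx) (hJ ht),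
      fun x hx t ht => by simp [hzero x hx t ht],
      fun x hx t ht => by simpa using (neg_le_abs _).trans (hprofile x hx t (hJ ht))⟩⟩

lemma IsBarrierMargin.exists_forall_abs_le_mul_infDist (h : IsBarrierMargin p β c ε) (hσ : 0 < σ)
    (hθ : 0 < θ) :
    ∃ K > 0, ∀ M L R T (ω : Set E) (a : E) ν v G H v', σ ≤ 1 → σ ≤ R → 0 ≤ L →
      c * (1 - β) * σ * (L + 2) ≤ ε → IsNormalCollar ω a R L ν →
      IsDirichletSolution p M (ball a (2 * R) ∩ ω) (ball a R ∩ frontier ω) (Ioo (T - θ) T)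
        v G H v' →
      (∀ x ∈ ball a (σ / 2) ∩ ω, ∀ t ∈ Ioo (T - θ) T,
        |v x t| ≤ c * infDist x (frontier ω) ^ (1 - β)) →
      ∀ x ∈ ball a (σ / 4) ∩ ω, ∀ t ∈ Ioo (T - θ / 4) T,
        |v x t| ≤ K * infDist x (frontier ω) := by
  obtain ⟨K, hK, hle⟩ := h.exists_forall_le_mul_infDist (E := E) (s := 3 * σ / 8)
    (by positivity) (half_pos hθ)
  refine ⟨K, hK, fun M L R T ω a ν v G H v' hσ₁ hσR hL hLε hω hv hprofile x hx t ht => ?_⟩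
  have hsub : closedBall a (3 * σ / 8) ⊆ ball a (σ / 2) := closedBall_subset_ball (by linarith)
  have htime : Icc (t - θ / 2) t ⊆ Ioo (T - θ) T :=
    (Icc_subset_Ioo_iff (by linarith)).2 ⟨by linarith [ht.1], ht.2⟩
  have hx' : x ∈ ω ∩ closedBall a (2 * (3 * σ / 8) / 3) :=
    ⟨hx.2, closedBall_subset_closedBall (by linarith) (ball_subset_closedBall hx.1)⟩
  have hcq : 0 < c * (1 - β) := mul_pos h.const_pos (sub_pos.2 h.lt_one)
  have hLε' : c * (1 - β) * (2 * (3 * σ / 8)) * (L + 2) ≤ ε := hLε.trans' (by gcongr; linarith)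
  have hjet : ∀ y ∈ ω ∩ closedBall a (3 * σ / 8), ∃ ν D,
      HasGradLaplacianAt (infDist · (frontier ω)) ν D y ∧ ‖ν‖ = 1 ∧ |D| ≤ L := fun y hy =>
    hω.exists_hasGradLaplacianAt ⟨ball_subset_ball (by linarith) (hsub hy.2), hy.1⟩
  obtain ⟨hsub₁, hsub₂⟩ := hv.isProfileSubsolution (β := β) (c := c) (s := 3 * σ / 8) hω.isOpen
    (by positivity) (by linarith) htime fun y hy => hprofile y ⟨hsub hy.2, hy.1⟩
  have bound := fun w => hle L ω a t w (by linarith) hL hLε' hω.isOpen hω.mem_frontier hjet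
  exact abs_le'.2 ⟨bound _ hsub₁ x hx', by simpa using bound _ hsub₂ x hx'⟩

lemma rpow_le_div_mul_of_le_mul_rpow_neg {z d κ : ℝ} (hp : 1 < p) (hβp : β * (p - 1) = 1)
    (hz : 0 ≤ z) (hd : 0 < d) (hκ : 0 ≤ κ) (h : z ≤ κ * d ^ (-β)) :
    z ^ p ≤ κ ^ (p - 1) / d * z :=
  calc z ^ p = z ^ (p - 1) * z := by rw [← Real.rpow_add_one' hz (by linarith), sub_add_cancel]
    _ ≤ (κ * d ^ (-β)) ^ (p - 1) * z := by gcongr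
    _ = κ ^ (p - 1) / d * z := by
      rw [Real.mul_rpow hκ (by positivity), ← Real.rpow_mul hd.le, neg_mul, hβp,
        Real.rpow_neg_one, div_eq_mul_inv]

lemma IsDirichletSolution.norm_le_of_abs_le_mul_infDist {m κ K : ℝ}
    (hv : IsDirichletSolution p M (ball a (2 * R) ∩ ω) (ball a R ∩ frontier ω) I v G H v')
    (hω : IsOpen ω) (ha : a ∈ frontier ω) (hp : 1 < p) (hβp : β * (p - 1) = 1) (hm₀ : 0 < m)
    (hm : m ≤ 1 / 2) (hκ : 0 ≤ κ) (hκm : 2 * κ ^ (p - 1) * m ≤ 1 / 2) (hK : 0 ≤ K) (hσ₁ : σ ≤ 1)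
    (hσR : σ ≤ R) (ht : t ∈ I)
    (hgrad : ∀ x ∈ ball a (σ / 2) ∩ ω, ‖G x t‖ ≤ κ * infDist x (frontier ω) ^ (-β))
    (hlin : ∀ x ∈ ball a (σ / 4) ∩ ω, |v x t| ≤ K * infDist x (frontier ω)) :
    ∀ x ∈ ball a (σ / 8) ∩ ω, ‖G x t‖ ≤ 4 * Module.finrank ℝ E * (2 * K) / m + (M + 1) := by
  intro x hx
  set d := infDist x (frontier ω)
  have hd₀ : 0 < d := infDist_frontier_pos hω ha hx.2
  have hσ : d < σ / 8 := (infDist_le_dist_of_mem ha).trans_lt hx.1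
  have hD : IsOpen (ball a (2 * R) ∩ ω) := isOpen_ball.inter hω
  have hnear : ∀ y ∈ closedBall x (m * d), y ∈ ball a (σ / 4) ∩ ω ∧
      d ≤ 2 * infDist y (frontier ω) ∧ infDist y (frontier ω) ≤ 2 * d := fun y hy => by
    have := mem_inter_and_infDist_le_of_mem_closedBall hω ha hx (by nlinarith) hy
    rwa [show 2 * (σ / 8) = σ / 4 by ring] at this
  have hmem : ∀ y ∈ closedBall x (m * d), y ∈ ball a (2 * R) ∩ ω := fun y hy =>
    ⟨ball_subset_ball (by linarith) (hnear y hy).1.1, (hnear y hy).1.2⟩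
  have hM : 0 ≤ M := (abs_nonneg _).trans
    (hv.abs_le x (hmem x (mem_closedBall_self (by positivity))) t ht)
  have hest : ‖G x t‖ ≤
      4 * Module.finrank ℝ E * (2 * K * d) / (m * d) + (M + 1) * (m * d) := by
    refine norm_gradient_le_of_abs_laplacian_le (u := (v · t)) (G := (G · t))
      (l := fun y => LinearMap.trace ℝ E (H y t)) (B := 2 * κ ^ (p - 1) / d) (by positivity)
      (by positivity) hM (by positivity) ?_
      (fun y hy => (hv.hasParabolicJetAt hD (hmem y hy) ht).2)
      (fun y hy => (hv.hasFDerivAt y (hmem y hy) t ht).continuousAt.continuousWithinAt)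
      (fun y hy => ?_) fun y hy => ?_
    · rwa [div_mul_eq_mul_div, ← mul_assoc, mul_div_cancel_right₀ _ hd₀.ne']
    · refine (hlin y (hnear y hy).1).trans ?_
      nlinarith [(hnear y hy).2.2]
    · obtain ⟨hyσ, hdy, -⟩ := hnear y hy
      have hpow : ‖G y t‖ ^ p ≤ 2 * κ ^ (p - 1) / d * ‖G y t‖ := by
        refine (rpow_le_div_mul_of_le_mul_rpow_neg hp hβp (norm_nonneg _) (by linarith) hκ
          (hgrad y ⟨ball_subset_ball (by linarith) hyσ.1, hyσ.2⟩)).trans ?_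
        gcongr ?_ * _
        rw [div_le_div_iff₀ (by linarith) hd₀]
        nlinarith [Real.rpow_nonneg hκ (p - 1)]
      rw [← sub_sub_self (v' y t) (LinearMap.trace ℝ E (H y t)), hv.sub_trace_eq y (hmem y hy) t ht]
      refine (abs_sub _ _).trans (add_le_add (hv.abs_le y (hmem y hy) t ht) ?_)
      rwa [abs_of_nonneg (by positivity)]
  refine hest.trans ?_
  rw [← mul_assoc, mul_div_mul_right _ _ hd₀.ne']
  gcongr
  exact mul_le_of_le_one_right (by linarith) (by nlinarith)

lemma IsBarrierMargin.exists_forall_norm_le (h : IsBarrierMargin p β c ε)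
    (hmargin : (c * (1 - β) + ε) ^ p + (Module.finrank ℝ E + 1) * ε < β * (c * (1 - β)))
    (hM : 0 ≤ M) (hσ : 0 < σ) (hθ : 0 < θ) :
    ∃ K > 0, ∀ L r R T (ω : Set E) (a : E) ν v G H v', 0 ≤ L → r ≤ 1 →
      c * (1 - β) * r * (L + 2) ≤ ε → (∀ s ∈ Ioo 0 r, M ≤ ε * s ^ (-(β * p))) → σ ≤ r → r ≤ R →
      IsNormalCollar ω a R L ν →
      IsDirichletSolution p M (ball a (2 * R) ∩ ω) (ball a R ∩ frontier ω) (Ioo (T - θ) T)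
        v G H v' →
      (∀ x ∈ ball a (2 * R) ∩ ω, infDist x (frontier ω) ∈ Ioo 0 r → ∀ t ∈ Ioo (T - θ) T,
        ∀ τ : E, ‖τ‖ = 1 → ⟪τ, gradient (infDist · (frontier ω)) x⟫ = 0 →
          |⟪G x t, τ⟫| ^ p + |⟪H x t τ, τ⟫| ≤ ε ^ p * infDist x (frontier ω) ^ (-(β * p))) →
      (∀ b ∈ ball a σ ∩ frontier ω, ∀ t ∈ Ioo (T - θ) T,
        |⟪G (b + r • ν b) t, ν b⟫| < c * (1 - β) * r ^ (-β)) →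
      ∀ x ∈ ball a (σ / 8) ∩ ω, ∀ t ∈ Ioo (T - θ / 4) T, ‖G x t‖ ≤ K := by
  obtain ⟨K, hK, hlin⟩ := h.exists_forall_abs_le_mul_infDist (E := E) hσ hθ
  have hcq : 0 < c * (1 - β) := mul_pos h.const_pos (sub_pos.2 h.lt_one)
  have hκ : 0 < c * (1 - β) + ε := add_pos hcq h.margin_pos
  set κ := c * (1 - β) + ε
  set m := min (1 / 2) (1 / (2 * (2 * κ ^ (p - 1))))
  have hm₀ : 0 < m := by positivity
  have hκm : 2 * κ ^ (p - 1) * m ≤ 1 / 2 := by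
    have := (le_div_iff₀ (by positivity)).1 (min_le_right _ _ : m ≤ _)
    linarith
  refine ⟨4 * Module.finrank ℝ E * (2 * K) / m + (M + 1), by positivity, ?_⟩
  intro L r R T ω a ν v G H v' hL hr hrL hrM hσr hrR hω hv htan hend x hx t ht
  have hprofile := hv.abs_le_mul_rpow_and_norm_le hω h hmargin hrR hσr hrM htan hend
  have hσL : c * (1 - β) * σ * (L + 2) ≤ ε := hrL.trans' (by gcongr)
  have ht' : t ∈ Ioo (T - θ) T := ⟨by linarith [ht.1], ht.2⟩
  exact hv.norm_le_of_abs_le_mul_infDist hω.isOpen hω.mem_frontier h.one_lt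
    (by linarith [h.mul_eq]) hm₀ (min_le_left _ _) hκ.le hκm hK.le (hσr.trans hr)
    (hσr.trans hrR) ht' (fun y hy => (hprofile y hy t ht').2)
    (fun y hy => hlin M L R T ω a ν v G H v' (hσr.trans hr) (hσr.trans hrR) hL hσL hω hv
      (fun z hz s hs => (hprofile z hz s hs).1) y hy t ht) x hx

end BoundaryEstimates

/-! ### Choice of the constants -/

section Constants

variable {p β c ε : ℝ}

lemma exists_isBarrierMargin (hβ₀ : 0 < β) (hβ₁ : β < 1) (hβp : β * p = β + 1) (hc : 0 < c)
    (hcp : (c * (1 - β)) ^ p < β * (c * (1 - β))) (N : ℝ) :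
    ∃ ε, IsBarrierMargin p β c ε ∧ (c * (1 - β) + ε) ^ p + N * ε < β * (c * (1 - β)) := by
  have hp : 0 ≤ p := by nlinarith
  have hray : Continuous fun ε : ℝ => (c * (1 - β) + ε) ^ p + N * ε := by
    fun_prop (disch := assumption)
  have hbarrier : Continuous fun ε : ℝ => (c * (1 - β) * (1 + ε) + ε) ^ p + 3 * ε := by
    fun_prop (disch := assumption)
  have hright : Continuous fun ε : ℝ => c * (1 - β) * β * (1 - ε) ^ 2 := by fun_prop
  have hray₀ : ∀ᶠ ε in 𝓝 (0 : ℝ), (c * (1 - β) + ε) ^ p + N * ε < β * (c * (1 - β)) :=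
    hray.continuousAt.eventually_lt_const (by simpa using hcp)
  have hbarrier₀ : ∀ᶠ ε in 𝓝 (0 : ℝ),
      (c * (1 - β) * (1 + ε) + ε) ^ p + 3 * ε < c * (1 - β) * β * (1 - ε) ^ 2 :=
    hbarrier.continuousAt.eventually_lt hright.continuousAt
      (by simpa [mul_comm β] using hcp)
  obtain ⟨ε, ⟨hε₁, hε₂⟩, hε⟩ := (((hray₀.and hbarrier₀).filter_mono nhdsWithin_le_nhds).and
    (Ioo_mem_nhdsGT one_pos)).exists
  exact ⟨ε, ⟨hβ₀, hβ₁, hβp, hc, hε.1, hε.2, hε₂⟩, hε₁⟩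

lemma rpow_lt_mul_of_lt_rpow_self {k : ℝ} (hp : 1 < p) (hβp : β * (p - 1) = 1) (hk₀ : 0 < k)
    (hk : k < β ^ β) : k ^ p < β * k := by
  have hβ₀ : 0 ≤ β := by nlinarith
  calc k ^ p = k ^ (p - 1) * k := by rw [← Real.rpow_add_one hk₀.ne', sub_add_cancel]
    _ < (β ^ β) ^ (p - 1) * k := by gcongr
    _ = β * k := by rw [← Real.rpow_mul hβ₀, hβp, Real.rpow_one]

lemma exists_isBarrierMargin_of_lt_rpow_self {k : ℝ} (hp : 2 < p) (hβ : β = 1 / (p - 1))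
    (hk : k < β ^ β) (N : ℝ) :
    ∃ c ε, k < c * (1 - β) ∧ IsBarrierMargin p β c ε ∧
      (c * (1 - β) + ε) ^ p + N * ε < β * (c * (1 - β)) := by
  have hp₁ : 0 < p - 1 := by linarith
  have hβ₀ : 0 < β := by rw [hβ]; positivity
  have hβ₁ : β < 1 := by rw [hβ, div_lt_one hp₁]; linarith
  have hβp : β * (p - 1) = 1 := by rw [hβ, one_div_mul_cancel hp₁.ne']
  obtain ⟨k₁, hk₁, hk₁β⟩ := exists_between (max_lt hk (by positivity : 0 < β ^ β))
  obtain ⟨hkk₁, hk₁₀⟩ := max_lt_iff.1 hk₁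
  have hck₁ : k₁ / (1 - β) * (1 - β) = k₁ := div_mul_cancel₀ _ (sub_pos.2 hβ₁).ne'
  have hk₁p := rpow_lt_mul_of_lt_rpow_self (by linarith) hβp hk₁₀ hk₁β
  obtain ⟨ε, hε⟩ := exists_isBarrierMargin hβ₀ hβ₁ (by linarith : β * p = β + 1)
    (div_pos hk₁₀ (sub_pos.2 hβ₁)) (by rwa [hck₁]) N
  exact ⟨_, ε, hkk₁.trans_eq hck₁.symm, hε⟩

lemma exists_forall_le_mul_rpow_neg (A : ℝ) {q : ℝ} (hε : 0 < ε) (hq : 0 < q) :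
    ∃ r > 0, ∀ s ∈ Ioo 0 r, A ≤ ε * s ^ (-q) := by
  have hlim : Tendsto (fun s : ℝ => ε * s ^ (-q)) (𝓝[>] 0) atTop :=
    (tendsto_rpow_neg_nhdsGT_zero (neg_lt_zero.2 hq)).const_mul_atTop hε
  exact mem_nhdsGT_iff_exists_Ioo_subset.1 (hlim.eventually_ge_atTop A)

end Constants

theorem stmt13_general [FiniteDimensional ℝ E] {p β k M : ℝ} (hp : 2 < p) (hβ : β = 1 / (p - 1))
    (hk : k < β ^ β) (hM : 0 ≤ M) :
    ∃ K : ℝ → ℝ → ℝ, (∀ σ θ, 0 < σ → 0 < θ → 0 < K σ θ) ∧ ∀ L ≥ 0, ∀ C : ℝ → ℝ, ∃ r₀ > 0,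
      ∀ (ω : Set E) a R ν, IsNormalCollar ω a R L ν → ∀ T θ, 0 < θ → ∀ v G H v',
      IsDirichletSolution p M (ball a (2 * R) ∩ ω) (ball a R ∩ frontier ω) (Ioo (T - θ) T)
        v G H v' →
      (∀ ε ∈ Ioo (0 : ℝ) 1, ∀ x ∈ ball a (2 * R) ∩ ω, ∀ t ∈ Ioo (T - θ) T,
        ∀ τ : E, ‖τ‖ = 1 → ⟪τ, gradient (infDist · (frontier ω)) x⟫ = 0 →
          |⟪G x t, τ⟫| ^ p + |⟪H x t τ, τ⟫| ≤ ε * infDist x (frontier ω) ^ (-(β * p)) + C ε) →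
      ∀ r, 0 < r → r ≤ min r₀ R → ∀ σ, 0 < σ → σ ≤ r →
      (∀ b ∈ ball a σ ∩ frontier ω, ∀ t ∈ Ioo (T - θ) T,
        |⟪G (b + r • ν b) t, ν b⟫| ≤ k * r ^ (-β)) →
      ∀ x ∈ ball a (σ / 8) ∩ ω, ∀ t ∈ Ioo (T - θ / 4) T, ‖G x t‖ ≤ K σ θ := by
  obtain ⟨c, ε, hkc, hε, hmargin⟩ :=
    exists_isBarrierMargin_of_lt_rpow_self hp hβ hk (Module.finrank ℝ E + 1)
  have hε₀ := hε.margin_pos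
  have hcβ : 0 < c * (1 - β) := mul_pos hε.const_pos (sub_pos.2 hε.lt_one)
  have hq : 0 < β * p := by linarith [hε.mul_eq, hε.pos]
  choose! K hK hgrad using fun (σ θ : ℝ) (hσ : 0 < σ) (hθ : 0 < θ) =>
    hε.exists_forall_norm_le hmargin hM hσ hθ
  refine ⟨K, hK, fun L hL C => ?_⟩
  have hη : ε ^ p / 2 ∈ Ioo (0 : ℝ) 1 := by
    have := Real.rpow_le_one hε₀.le hε.margin_lt_one.le (by linarith : 0 ≤ p)
    exact ⟨by positivity, by linarith⟩
  obtain ⟨r₁, hr₁, hM₁⟩ := exists_forall_le_mul_rpow_neg M hε₀ hq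
  obtain ⟨r₂, hr₂, hC₂⟩ := exists_forall_le_mul_rpow_neg (C (ε ^ p / 2)) hη.1 hq
  refine ⟨min (min r₁ r₂) (min 1 (ε / (c * (1 - β) * (L + 2)))), by positivity, ?_⟩
  intro ω a R ν hω T θ hθ v G H v' hv htan r hr hrmin σ hσ hσr hend
  simp only [le_min_iff, le_div_iff₀ (by positivity : 0 < c * (1 - β) * (L + 2))] at hrmin
  obtain ⟨⟨⟨hrr₁, hrr₂⟩, hr₁', hrL⟩, hrR⟩ := hrmin
  refine hgrad σ θ hσ hθ L r R T ω a ν v G H v' hL hr₁' (by linarith)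
    (fun s hs => hM₁ s ⟨hs.1, hs.2.trans_le hrr₁⟩) hσr hrR hω hv ?_ ?_
  · intro x hx hδ t ht τ hτ hτν
    linarith [htan _ hη x hx t ht τ hτ hτν, hC₂ _ ⟨hδ.1, hδ.2.trans_le hrr₂⟩]
  · intro b hb t ht
    refine (hend b hb t ht).trans_lt ?_
    gcongr

theorem stmt13 {n : ℕ} (hn : 1 ≤ n)
    (p β dp : ℝ) (hp : 2 < p) (hβ : β = 1 / (p - 1)) (hdp : dp = β ^ β)
    (k : ℝ) (hk : k ∈ Ioo 0 dp) (M : ℝ) (hM : 0 < M) :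
    -- the constant K = K(n,p,k,M,σ,θ)
    ∃ K : ℝ → ℝ → ℝ, (∀ σ θ : ℝ, 0 < σ → 0 < θ → 0 < K σ θ) ∧
    -- the radius r₀ = r₀(n,p,k,M,L,(C_ε))
    ∀ L > (0 : ℝ), ∀ Cf : ℝ → ℝ, (∀ ε ∈ Ioo (0 : ℝ) 1, 0 < Cf ε) →
    ∃ r₀ > (0 : ℝ),
    -- the bounded C² domain ω and a ∈ ∂ω, R > 0, D = B_{2R}(a) ∩ ω
    ∀ ω : Set (EuclideanSpace ℝ (Fin n)), IsOpen ω → Bornology.IsBounded ω → IsC2Boundary ω →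
    ∀ a ∈ frontier ω, ∀ R > (0 : ℝ),
    ∀ δ : EuclideanSpace ℝ (Fin n) → ℝ, (∀ x, δ x = infDist x (frontier ω)) →
    -- inner sphere condition of radius R at each point of B_R(a) ∩ ∂ω
    (∀ b ∈ ball a R ∩ frontier ω, ∃ y, ball y R ⊆ ω ∧ dist y b = R) →
    -- δ is C² on D̄ with ‖Δδ‖_{L^∞(D)} ≤ L
    ContDiffOn ℝ 2 δ (closure (ball a (2 * R) ∩ ω)) →
    (∀ x ∈ ball a (2 * R) ∩ ω,
      |∑ i : Fin n, fderiv ℝ (fun y => fderiv ℝ δ y (EuclideanSpace.single i (1 : ℝ))) x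
        (EuclideanSpace.single i (1 : ℝ))| ≤ L) →
    -- the inward unit normal on B_R(a) ∩ ∂ω
    ∀ νB : EuclideanSpace ℝ (Fin n) → EuclideanSpace ℝ (Fin n),
    (∀ b ∈ ball a R ∩ frontier ω, ‖νB b‖ = 1 ∧
      ∀ s ∈ Ioo (0 : ℝ) R, b + s • νB b ∈ ω ∧ δ (b + s • νB b) = s) →
    ∀ T₀ θ : ℝ, 0 < θ →
    -- v with spatial gradient Gv, spatial Hessian Hv, time derivative v',
    -- all continuous on D̄ × [T₀-θ, T₀]
    ∀ (v : EuclideanSpace ℝ (Fin n) → ℝ → ℝ) (Gv : EuclideanSpace ℝ (Fin n) → ℝ → EuclideanSpace ℝ (Fin n)) (Hv : EuclideanSpace ℝ (Fin n) → ℝ → (EuclideanSpace ℝ (Fin n) →L[ℝ] EuclideanSpace ℝ (Fin n)))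
      (v' : EuclideanSpace ℝ (Fin n) → ℝ → ℝ),
    ContinuousOn (fun q : EuclideanSpace ℝ (Fin n) × ℝ => (v q.1 q.2, Gv q.1 q.2, Hv q.1 q.2, v' q.1 q.2))
      (closure (ball a (2 * R) ∩ ω) ×ˢ Icc (T₀ - θ) T₀) →
    (∀ t ∈ Icc (T₀ - θ) T₀, ∀ x ∈ closure (ball a (2 * R) ∩ ω),
      HasGradientWithinAt (fun y => v y t) (Gv x t) (closure (ball a (2 * R) ∩ ω)) x) →
    (∀ t ∈ Icc (T₀ - θ) T₀, ∀ x ∈ closure (ball a (2 * R) ∩ ω),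
      HasFDerivWithinAt (fun y => Gv y t) (Hv x t) (closure (ball a (2 * R) ∩ ω)) x) →
    (∀ x ∈ closure (ball a (2 * R) ∩ ω), ∀ t ∈ Icc (T₀ - θ) T₀,
      HasDerivWithinAt (fun s => v x s) (v' x t) (Icc (T₀ - θ) T₀) t) →
    -- vₜ - Δv = |∇v|^p in D × (T₀-θ, T₀)
    (∀ x ∈ ball a (2 * R) ∩ ω, ∀ t ∈ Ioo (T₀ - θ) T₀,
      v' x t - ∑ i : Fin n, ⟪Hv x t (EuclideanSpace.single i (1 : ℝ)),
        EuclideanSpace.single i (1 : ℝ)⟫ = ‖Gv x t‖ ^ p) →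
    -- v = 0 on (B_R(a) ∩ ∂ω) × (T₀-θ, T₀)
    (∀ b ∈ ball a R ∩ frontier ω, ∀ t ∈ Ioo (T₀ - θ) T₀, v b t = 0) →
    -- |vₜ| ≤ M in D × (T₀-θ, T₀)
    (∀ x ∈ ball a (2 * R) ∩ ω, ∀ t ∈ Ioo (T₀ - θ) T₀, |v' x t| ≤ M) →
    -- tangential estimate (5.4), with ν(x) = ∇δ(x)
    (∀ ε ∈ Ioo (0 : ℝ) 1, ∀ x ∈ ball a (2 * R) ∩ ω, ∀ t ∈ Ioo (T₀ - θ) T₀,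
      ∀ τ : EuclideanSpace ℝ (Fin n), ‖τ‖ = 1 → ⟪τ, gradient δ x⟫ = 0 →
        |⟪Gv x t, τ⟫| ^ p + |⟪Hv x t τ, τ⟫| ≤ ε * (δ x) ^ (-(β * p)) + Cf ε) →
    -- hypothesis (5.5)
    ∀ r : ℝ, 0 < r → r ≤ min r₀ R → ∀ σ : ℝ, 0 < σ → σ ≤ r →
    (∀ b ∈ ball a σ ∩ frontier ω, ∀ t ∈ Ioo (T₀ - θ) T₀,
      |⟪Gv (b + r • νB b) t, νB b⟫| ≤ k * r ^ (-β)) →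
    -- conclusion (5.6)
    ∀ x ∈ ball a (σ / 8) ∩ ω, ∀ t ∈ Ioo (T₀ - θ / 4) T₀, ‖Gv x t‖ ≤ K σ θ := by
  obtain ⟨K, hK, hgeneral⟩ :=
    stmt13_general (E := EuclideanSpace ℝ (Fin n)) hp hβ (hk.2.trans_eq hdp) hM.le
  refine ⟨K, hK, fun L hL C _ => ?_⟩
  obtain ⟨r₀, hr₀, hgrad⟩ := hgeneral L hL.le C
  refine ⟨r₀, hr₀, ?_⟩
  intro ω hω _ _ a ha R _ δ hδ _ hδ₂ hδL ν hν T θ hθ v G H v' hcont hG hH hv' hpde hzero hM' htan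
  obtain rfl : δ = (infDist · (frontier ω)) := funext hδ
  refine hgrad ω a R ν (.of_abs_sum_fderiv_le (EuclideanSpace.basisFun (Fin n) ℝ) hω ha hδ₂ ?_ hν)
    T θ hθ v G H v' (.of_closure (EuclideanSpace.basisFun (Fin n) ℝ) (isOpen_ball.inter hω)
      (hcont.fst.prodMk hcont.snd.fst) hG hH hv' ?_ hzero hM') htan
  · simpa only [EuclideanSpace.basisFun_apply] using hδL
  · simpa only [EuclideanSpace.basisFun_apply] using hpde
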